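/- Any two equivalent cliques in the d-dimensional Keller graph, each having at most 11 vertices, are equal. -/

import Mathlib

/-- Adjacency in the `d`-dimensional Keller graph on vertex set
`{0,1,2,3}^d = (ZMod 4)^d`: two vertices are adjacent if they differ in at
least two coordinates and in some coordinate the difference is `2` mod `4`. -/
def KellerAdj {d : ℕ} (u v : Fin d → ZMod 4) : Prop :=
  2 ≤ {i | u i ≠ v i}.ncard ∧ ∃ i, u i - v i = 2

/-- `g(v, w) = ∏ᵢ (2·[vᵢ = wᵢ] + [wᵢ ∉ {vᵢ, vᵢ'}])`, where `x' = x + 2`. -/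
def kellerG {d : ℕ} (v w : Fin d → ZMod 4) : ℕ :=
  ∏ i, (2 * (if v i = w i then 1 else 0) +
    (if w i ≠ v i ∧ w i ≠ v i + 2 then 1 else 0))



namespace KC

/-- letter `a` is the set of points `{a, a+1}` of the 4-cycle -/
def L (a p : ZMod 4) : Prop := p = a ∨ p = a + 1

instance (a p : ZMod 4) : Decidable (L a p) := by unfold L; infer_instance

variable {d : ℕ}

def Mem (v x : Fin d → ZMod 4) : Prop := ∀ j, L (v j) (x j)

def Cov (A : Finset (Fin d → ZMod 4)) (x : Fin d → ZMod 4) : Prop := ∃ v ∈ A, Mem v x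

def Dj (u v : Fin d → ZMod 4) : Prop := ∃ j, v j = u j + 2

def NT (u v : Fin d → ZMod 4) : Prop := ∀ j, ∃ k, k ≠ j ∧ u k ≠ v k

def Code (A : Finset (Fin d → ZMod 4)) : Prop := ∀ u ∈ A, ∀ v ∈ A, u ≠ v → Dj u v ∧ NT u v

def Mt (v s : Fin d → ZMod 4) : Prop := ∀ j, v j ≠ s j + 2

instance (v s : Fin d → ZMod 4) : Decidable (Mt v s) := by unfold Mt; infer_instance

theorem L_compl : ∀ a p : ZMod 4, L a p → ¬ L (a + 2) p := by decide

theorem add22 : ∀ a : ZMod 4, a + 2 + 2 = a := by decide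

theorem ne_add2 : ∀ a : ZMod 4, a ≠ a + 2 := by decide

theorem Dj.symm {u v : Fin d → ZMod 4} (h : Dj u v) : Dj v u := by
  obtain ⟨j, hj⟩ := h
  exact ⟨j, by rw [hj, add22]⟩

theorem NT.symm {u v : Fin d → ZMod 4} (h : NT u v) : NT v u := by
  intro j
  obtain ⟨k, hk, h2⟩ := h j
  exact ⟨k, hk, h2.symm⟩

theorem Mt.symm {u v : Fin d → ZMod 4} (h : Mt u v) : Mt v u := by
  intro j hj
  exact h j (by rw [hj, add22])

theorem Mt.refl (u : Fin d → ZMod 4) : Mt u u := fun j => ne_add2 _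

theorem Dj.not_mem {u v x : Fin d → ZMod 4} (h : Dj u v) (hu : Mem u x) : ¬ Mem v x := by
  obtain ⟨j, hj⟩ := h
  intro hv
  have := hv j
  rw [hj] at this
  exact L_compl _ _ (hu j) this

theorem Code.uniq {A : Finset (Fin d → ZMod 4)} (hA : Code A) {u v x : Fin d → ZMod 4}
    (hu : u ∈ A) (hv : v ∈ A) (hux : Mem u x) (hvx : Mem v x) : u = v := by
  by_contra h
  exact (hA u hu v hv h).1.not_mem hux hvx

theorem Code.mono {A B : Finset (Fin d → ZMod 4)} (hA : Code A) (h : B ⊆ A) : Code B :=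
  fun u hu v hv => hA u (h hu) v (h hv)

theorem L_meet : ∀ a s : ZMod 4, a ≠ s + 2 → ∃ p, L a p ∧ L s p := by decide

theorem Mt.point {v s : Fin d → ZMod 4} (h : Mt v s) : ∃ x, Mem v x ∧ Mem s x := by
  choose f hf using fun j => L_meet _ _ (h j)
  exact ⟨f, fun j => (hf j).1, fun j => (hf j).2⟩

theorem Mt.of_point {v s x : Fin d → ZMod 4} (hv : Mem v x) (hs : Mem s x) : Mt v s := by
  intro j hj
  have := hv j
  rw [hj] at this
  exact L_compl _ _ (hs j) this

theorem Mem.update {v x : Fin d → ZMod 4} {j : Fin d} {p : ZMod 4} (h : Mem v x)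
    (hp : L (v j) p) : Mem v (Function.update x j p) := by
  intro t
  by_cases ht : t = j
  · subst ht; simpa using hp
  · simpa [ht] using h t

theorem mem_upd_iff {v x : Fin d → ZMod 4} {j : Fin d} {a : ZMod 4} :
    Mem (Function.update v j a) x ↔ L a (x j) ∧ ∀ t, t ≠ j → L (v t) (x t) := by
  constructor
  · intro h
    refine ⟨by simpa using h j, fun t ht => by simpa [ht] using h t⟩
  · rintro ⟨h1, h2⟩ t
    by_cases ht : t = j
    · subst ht; simpa using h1
    · simpa [ht] using h2 t ht

theorem mem_upd_pt_iff {v x : Fin d → ZMod 4} {j : Fin d} {p : ZMod 4} :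
    Mem v (Function.update x j p) ↔ L (v j) p ∧ ∀ t, t ≠ j → L (v t) (x t) := by
  constructor
  · intro h
    refine ⟨by simpa using h j, fun t ht => by simpa [ht] using h t⟩
  · rintro ⟨h1, h2⟩ t
    by_cases ht : t = j
    · subst ht; simpa using h1
    · simpa [ht] using h2 t ht

theorem Mt.upd {v s : Fin d → ZMod 4} (h : Mt v s) {j : Fin d} {a : ZMod 4} (ha : a ≠ s j + 2) :
    Mt (Function.update v j a) s := by
  intro t
  by_cases ht : t = j
  · subst ht; simpa using ha
  · simpa [ht] using h t

/-- inclusion of traces -/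
theorem incl {c u s : Fin d → ZMod 4} (hc : Mt c s)
    (h : ∀ x, Mem s x → Mem c x → Mem u x) (j : Fin d) (p : ZMod 4) (hs : L (s j) p)
    (hcp : L (c j) p) : L (u j) p := by
  obtain ⟨x, hx1, hx2⟩ := hc.point
  simpa using h _ (hx2.update hs) (hx1.update hcp) j

theorem letter_eq : ∀ s a b : ZMod 4, a ≠ s + 2 → b ≠ s + 2 →
    (∀ p, L s p → (L a p ↔ L b p)) → a = b := by decide

theorem letter_sub : ∀ s a b : ZMod 4, a ≠ s + 2 → b ≠ s + 2 →
    (∀ p, L s p ∧ L a p → L b p) → a = b ∨ b = s := by decide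

theorem trace_eq {u v s : Fin d → ZMod 4} (hu : Mt u s) (hv : Mt v s)
    (h : ∀ x, Mem s x → (Mem u x ↔ Mem v x)) : u = v := by
  funext j
  refine letter_eq (s j) _ _ (hu j) (hv j) fun p hp => ⟨fun h1 => ?_, fun h1 => ?_⟩
  · exact incl hu (fun x hx hx2 => (h x hx).1 hx2) j p hp h1
  · exact incl hv (fun x hx hx2 => (h x hx).2 hx2) j p hp h1

theorem flip_facts : ∀ s c p : ZMod 4, c ≠ s + 2 → c ≠ s → L s p →
    L s (2 * s + 1 - p) ∧ (L (c + 2) (2 * s + 1 - p) ↔ L c p) ∧ (L c (2 * s + 1 - p) ↔ L (c + 2) p) ∧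
    (L c p ∨ L (c + 2) p) := by decide

theorem three : ∀ s c v : ZMod 4, c ≠ s + 2 → c ≠ s → v ≠ s + 2 → v = s ∨ v = c ∨ v = c + 2 := by
  decide

theorem add2_ne : ∀ s c : ZMod 4, c ≠ s → c + 2 ≠ s + 2 := by decide
theorem add2_ne' : ∀ s c : ZMod 4, c ≠ s + 2 → c + 2 ≠ s := by decide
theorem flip_flip : ∀ s p : ZMod 4, 2 * s + 1 - (2 * s + 1 - p) = p := by decide

theorem c5 (s : Fin d → ZMod 4) : ∀ n, ∀ A : Finset (Fin d → ZMod 4), A.card = n → Code A →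
    ∀ u, (∀ v ∈ A, Mt v s) → Mt u s → (∀ x, Mem s x → (Cov A x ↔ Mem u x)) →
    A = {u} ∨ 5 ≤ A.card := by
  intro n
  induction n using Nat.strong_induction_on with
  | _ n ih =>
  intro A hn hA u hAs hus hcov
  by_cases hall : ∀ c ∈ A, c = u
  · left
    obtain ⟨x, hx1, hx2⟩ := hus.point
    obtain ⟨v, hv, -⟩ := (hcov x hx2).2 hx1
    ext c
    simp only [Finset.mem_singleton]
    exact ⟨hall c, fun h => by rw [h, ← hall v hv]; exact hv⟩
  right
  push Not at hall
  obtain ⟨c0, hc0, hne⟩ := hall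
  obtain ⟨j, hj⟩ := Function.ne_iff.1 hne
  have huj : u j = s j := by
    refine (letter_sub _ _ _ (hAs c0 hc0 j) (hus j) ?_).resolve_left hj
    exact fun p ⟨hp, hq⟩ => incl (hAs c0 hc0) (fun x hx hx2 => (hcov x hx).1 ⟨c0, hc0, hx2⟩) j p hp hq
  -- flipping
  have hflip : ∀ c ∈ A, c j ≠ s j → ∀ x, Mem s x → (Cov (A.filter (fun v => v j = c j)) x) →
      Cov (A.filter (fun v => v j = c j + 2)) (Function.update x j (2 * s j + 1 - x j)) := by
    intro c hc hcj x hx ⟨v, hv, hvx⟩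
    rw [Finset.mem_filter] at hv
    have F := flip_facts (s j) (c j) (x j) (hAs c hc j) hcj (hx j)
    have hux := (hcov x hx).1 ⟨v, hv.1, hvx⟩
    have hs' : Mem s (Function.update x j (2 * s j + 1 - x j)) := hx.update F.1
    have hu' : Mem u (Function.update x j (2 * s j + 1 - x j)) := hux.update (huj ▸ F.1)
    obtain ⟨w, hw, hwx⟩ := (hcov _ hs').2 hu'
    refine ⟨w, Finset.mem_filter.2 ⟨hw, ?_⟩, hwx⟩
    rcases three (s j) (c j) (w j) (hAs c hc j) hcj (hAs w hw j) with h | h | h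
    · exfalso
      have hwx2 : Mem w x := by
        rw [mem_upd_pt_iff] at hwx
        intro t
        by_cases ht : t = j
        · subst ht; rw [h]; exact hx t
        · exact hwx.2 t ht
      have := hA.uniq hv.1 hw hvx hwx2
      subst this
      exact hcj (hv.2 ▸ h)
    · exfalso
      have h1 := (mem_upd_pt_iff.1 hwx).1
      rw [h, F.2.2.1] at h1
      have h2 := hvx j
      rw [hv.2] at h2
      exact L_compl _ _ h2 h1
    · exact h
  have hne2 : ∀ c ∈ A, c j ≠ s j → ∃ c1 ∈ A, c1 j = c j + 2 := by
    intro c hc hcj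
    obtain ⟨x, hx1, hx2⟩ := (hAs c hc).point
    obtain ⟨v, hv, -⟩ := hflip c hc hcj x hx2 ⟨c, Finset.mem_filter.2 ⟨hc, rfl⟩, hx1⟩
    exact ⟨v, (Finset.mem_filter.1 hv).1, (Finset.mem_filter.1 hv).2⟩
  have hlt : ∀ c ∈ A, c j ≠ s j → (A.filter (fun v => v j = c j + 2)).card < n := by
    intro c hc hcj
    rw [← hn]
    refine Finset.card_lt_card (Finset.filter_ssubset.2 ⟨c, hc, ne_add2 _⟩)
  -- singles
  have hsingle : ∀ c ∈ A, c j ≠ s j → (A.filter (fun v => v j = c j)).card ≤ 1 → 5 ≤ A.card := by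
    intro c hc hcj h1
    have hc1 : ∀ v ∈ A, v j = c j → v = c := fun v hv hvc =>
      Finset.card_le_one.1 h1 v (Finset.mem_filter.2 ⟨hv, hvc⟩) c (Finset.mem_filter.2 ⟨hc, rfl⟩)
    have key := ih _ (hlt c hc hcj) (A.filter (fun v => v j = c j + 2)) rfl
      (hA.mono (Finset.filter_subset _ _)) (Function.update c j (c j + 2))
      (fun v hv => hAs v (Finset.mem_filter.1 hv).1)
      ((hAs c hc).upd (add2_ne _ _ hcj)) ?_
    · rcases key with key | key
      · exfalso
        have : Function.update c j (c j + 2) ∈ A.filter (fun v => v j = c j + 2) := by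
          rw [key]; simp
        have h2 := (Finset.mem_filter.1 this).1
        have hne : c ≠ Function.update c j (c j + 2) := by
          intro h
          have := congrFun h j
          simp only [Function.update_self] at this
          exact ne_add2 _ this
        obtain ⟨k, hk, hk2⟩ := (hA c hc _ h2 hne).2 j
        exact hk2 (by simp [hk])
      · exact key.trans (Finset.card_le_card (Finset.filter_subset _ _))
    · intro x hx
      have F := flip_facts (s j) (c j) (x j) (hAs c hc j) hcj (hx j)
      constructor
      · rintro ⟨v, hv, hvx⟩
        have hv' := Finset.mem_filter.1 hv
        have hvj : v j ≠ s j := by rw [hv'.2]; exact add2_ne' _ _ (hAs c hc j)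
        obtain ⟨w, hw, hwx⟩ := hflip v hv'.1 hvj x hx ⟨v, Finset.mem_filter.2 ⟨hv'.1, rfl⟩, hvx⟩
        have hw' := Finset.mem_filter.1 hw
        have : w = c := hc1 w hw'.1 (by rw [hw'.2, hv'.2, add22])
        subst this
        rw [mem_upd_iff]
        refine ⟨?_, (mem_upd_pt_iff.1 hwx).2⟩
        have := hvx j
        rwa [hv'.2] at this
      · intro hx2
        rw [mem_upd_iff] at hx2
        have hs' : Mem s (Function.update x j (2 * s j + 1 - x j)) := hx.update F.1
        have hc' : Mem c (Function.update x j (2 * s j + 1 - x j)) :=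
          mem_upd_pt_iff.2 ⟨F.2.2.1.2 hx2.1, hx2.2⟩
        have := hflip c hc hcj _ hs' ⟨c, Finset.mem_filter.2 ⟨hc, rfl⟩, hc'⟩
        simpa [flip_flip] using this
  have hc0j : c0 j ≠ s j := by rw [← huj]; exact hj
  obtain ⟨c1, hc1, hc1j⟩ := hne2 c0 hc0 hc0j
  have hc1j' : c1 j ≠ s j := by rw [hc1j]; exact add2_ne' _ _ (hAs c0 hc0 j)
  by_contra hlt5
  have a0 : 2 ≤ (A.filter (fun v => v j = c0 j)).card := by
    by_contra h
    exact hlt5 (hsingle c0 hc0 hc0j (by omega))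
  have a1 : 2 ≤ (A.filter (fun v => v j = c1 j)).card := by
    by_contra h
    exact hlt5 (hsingle c1 hc1 hc1j' (by omega))
  have hdisj : Disjoint (A.filter (fun v => v j = c0 j)) (A.filter (fun v => v j = c1 j)) := by
    rw [Finset.disjoint_left]
    intro v hv hv2
    have h1 := (Finset.mem_filter.1 hv).2
    have h2 := (Finset.mem_filter.1 hv2).2
    rw [h1, hc1j] at h2
    exact ne_add2 _ h2
  have hsub : (A.filter (fun v => v j = c0 j)) ∪ (A.filter (fun v => v j = c1 j)) ⊆ A :=
    Finset.union_subset (Finset.filter_subset _ _) (Finset.filter_subset _ _)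
  have hcard := Finset.card_le_card hsub
  rw [Finset.card_union_of_disjoint hdisj] at hcard
  have hEq := Finset.eq_of_subset_of_card_le hsub (by
    rw [Finset.card_union_of_disjoint hdisj]; omega)
  have key := ih _ (by rw [← hn]; omega) (A.filter (fun v => v j = c0 j)) rfl
      (hA.mono (Finset.filter_subset _ _)) (Function.update u j (c0 j))
      (fun v hv => hAs v (Finset.mem_filter.1 hv).1)
      (hus.upd (hAs c0 hc0 j)) ?_
  · rcases key with key | key
    · rw [key] at a0; simp at a0
    · omega
  · intro x hx
    constructor
    · rintro ⟨v, hv, hvx⟩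
      have hv' := Finset.mem_filter.1 hv
      rw [mem_upd_iff]
      exact ⟨hv'.2 ▸ hvx j, fun t _ => (hcov x hx).1 ⟨v, hv'.1, hvx⟩ t⟩
    · intro h
      rw [mem_upd_iff] at h
      have hux : Mem u x := by
        intro t
        by_cases ht : t = j
        · subst ht; rw [huj]; exact hx t
        · exact h.2 t ht
      obtain ⟨v, hv, hvx⟩ := (hcov x hx).2 hux
      refine ⟨v, ?_, hvx⟩
      have hv2 := hv
      rw [← hEq, Finset.mem_union] at hv2
      rcases hv2 with h2 | h2
      · exact h2
      · exfalso
        have h3 := (Finset.mem_filter.1 h2).2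
        have := hvx j
        rw [h3, hc1j] at this
        exact L_compl _ _ h.1 this

/-- a word covered by a code it does not belong to meets at least five words of the code -/
theorem cover5 {A : Finset (Fin d → ZMod 4)} (hA : Code A) {u : Fin d → ZMod 4} (hu : u ∉ A)
    (h : ∀ x, Mem u x → Cov A x) : 5 ≤ (A.filter (fun v => Mt v u)).card := by
  have hc : ∀ x, Mem u x → (Cov (A.filter (fun v => Mt v u)) x ↔ Mem u x) := by
    intro x hx
    refine ⟨fun _ => hx, fun _ => ?_⟩
    obtain ⟨v, hv, hvx⟩ := h x hx
    exact ⟨v, Finset.mem_filter.2 ⟨hv, Mt.of_point hvx hx⟩, hvx⟩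
  rcases c5 u _ (A.filter (fun v => Mt v u)) rfl (hA.mono (Finset.filter_subset _ _)) u
    (fun v hv => (Finset.mem_filter.1 hv).2) (Mt.refl u) hc with h1 | h1
  · exfalso
    have : u ∈ A.filter (fun v => Mt v u) := by rw [h1]; simp
    exact hu (Finset.mem_filter.1 this).1
  · exact h1

theorem cover5' {A : Finset (Fin d → ZMod 4)} (hA : Code A) {u : Fin d → ZMod 4} (hu : u ∉ A)
    (h : ∀ x, Mem u x → Cov A x) : 5 ≤ A.card :=
  (cover5 hA hu h).trans (Finset.card_le_card (Finset.filter_subset _ _))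

end KC


namespace KC
variable {d : ℕ}

theorem side {A : Finset (Fin d → ZMod 4)} (hA : Code A) {u : Fin d → ZMod 4}
    (hm : ∀ v ∈ A, Mt v u) (h : ∀ x, Mem u x → Cov A x) (j : Fin d) (c : ZMod 4)
    (hc : c ≠ u j) (hc2 : c ≠ u j + 2) (hv : ∀ v ∈ A, v j = u j ∨ v j = c) :
    ∀ v ∈ A, v j = u j := by
  intro v hvA
  rcases hv v hvA with h1 | h1
  · exact h1
  exfalso
  obtain ⟨x, hx, hxu⟩ := (hm v hvA).point
  have F := flip_facts (u j) c (x j) hc2 hc (hxu j)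
  obtain ⟨w, hw, hwx⟩ := h _ (hxu.update F.1)
  rw [mem_upd_pt_iff] at hwx
  rcases hv w hw with h2 | h2
  · have : Mem w x := by
      intro t
      by_cases ht : t = j
      · subst ht; rw [h2]; exact hxu t
      · exact hwx.2 t ht
    have := hA.uniq hvA hw hx this
    subst this
    exact hc (h1 ▸ h2)
  · have h3 := hwx.1
    rw [h2, F.2.2.1] at h3
    have h4 := hx j
    rw [h1] at h4
    exact L_compl _ _ h4 h3

theorem lett4 : ∀ a b : ZMod 4, a ≠ b → b = a + 2 ∨ (b ≠ a ∧ b ≠ a + 2 ∧ a ≠ b ∧ a ≠ b + 2) := by decide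
theorem lett_two : ∀ a b v : ZMod 4, b ≠ a → b ≠ a + 2 → v ≠ a + 2 → v ≠ b + 2 → v = a ∨ v = b := by
  decide
theorem lett_opp : ∀ a v : ZMod 4, v ≠ a + 2 → v ≠ a + 2 + 2 → v = a + 1 ∨ v = a + 3 := by
  decide
theorem add13 : ∀ a : ZMod 4, a + 1 ≠ a + 2 ∧ a + 3 ≠ a + 2 ∧ a + 1 ≠ a + 3 ∧ a + 3 = a + 1 + 2 := by decide

theorem half {A : Finset (Fin d → ZMod 4)} (hA : Code A) {u : Fin d → ZMod 4}
    (hm : ∀ v ∈ A, Mt v u) (h : ∀ x, Mem u x → Cov A x) (j : Fin d) (c : ZMod 4)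
    (hc2 : c ≠ u j + 2) (hv : ∀ v ∈ A, v j = c ∨ v j = c + 2) :
    Function.update u j c ∈ A ∨ 5 ≤ (A.filter (fun v => v j = c)).card := by
  have hcov : ∀ x, Mem u x → (Cov (A.filter (fun v => v j = c)) x ↔ Mem (Function.update u j c) x) := by
    intro x hx
    rw [mem_upd_iff]
    constructor
    · rintro ⟨v, hv1, hvx⟩
      exact ⟨(Finset.mem_filter.1 hv1).2 ▸ hvx j, fun t _ => hx t⟩
    · rintro ⟨h1, -⟩
      obtain ⟨v, hvA, hvx⟩ := h x hx
      refine ⟨v, Finset.mem_filter.2 ⟨hvA, ?_⟩, hvx⟩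
      rcases hv v hvA with h2 | h2
      · exact h2
      · exfalso
        have := hvx j
        rw [h2] at this
        exact L_compl _ _ h1 this
  rcases c5 u _ _ rfl (hA.mono (Finset.filter_subset (fun v => v j = c) _)) (Function.update u j c)
    (fun v hv => hm v (Finset.mem_filter.1 hv).1) ((Mt.refl u).upd hc2) hcov with h1 | h1
  · left
    have : Function.update u j c ∈ A.filter (fun v => v j = c) := by rw [h1]; simp
    exact (Finset.mem_filter.1 this).1
  · exact Or.inr h1

theorem all_of_five {A : Finset (Fin d → ZMod 4)} (hA : Code A) (h5 : A.card ≤ 5)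
    {u : Fin d → ZMod 4} (hu : u ∉ A) (h : ∀ x, Mem u x → Cov A x) : ∀ v ∈ A, Mt v u := by
  have := Finset.eq_of_subset_of_card_le (Finset.filter_subset (fun v => Mt v u) A)
    (h5.trans (cover5 hA hu h))
  intro v hv
  rw [← this] at hv
  exact (Finset.mem_filter.1 hv).2

/-- points of a word exist -/
theorem mem_self (u : Fin d → ZMod 4) : Mem u u := fun j => Or.inl rfl

theorem twin_not {A : Finset (Fin d → ZMod 4)} (hA : Code A) {u v : Fin d → ZMod 4} (hu : u ∈ A)
    (hv : v ∈ A) (j : Fin d) (h : ∀ t, t ≠ j → u t = v t) : u = v := by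
  by_contra hne
  obtain ⟨k, hk, h2⟩ := (hA u hu v hv hne).2 j
  exact h2 (h k hk)

theorem U5 {A : Finset (Fin d → ZMod 4)} (hA : Code A) (h5 : A.card ≤ 5)
    {u u' : Fin d → ZMod 4} (hu : u ∉ A) (hu' : u' ∉ A) (h : ∀ x, Mem u x → Cov A x)
    (h' : ∀ x, Mem u' x → Cov A x) : u = u' := by
  by_contra hne
  obtain ⟨j, hj⟩ := Function.ne_iff.1 hne
  have hm := all_of_five hA h5 hu h
  have hm' := all_of_five hA h5 hu' h'
  obtain ⟨v0, hv0, -⟩ := h u (mem_self u)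
  rcases lett4 _ _ hj with h1 | ⟨h1, h2, h3, h4⟩
  · have hv : ∀ v ∈ A, v j = u j + 1 ∨ v j = u j + 3 := fun v hv =>
      lett_opp _ _ (hm v hv j) (h1 ▸ hm' v hv j)
    have D := add13 (u j)
    have e1 := half hA hm h j (u j + 1) D.1 (fun v hv' => D.2.2.2 ▸ hv v hv')
    have e3 := half hA hm h j (u j + 3) D.2.1 (fun v hv' => by
      rw [D.2.2.2, add22]; exact D.2.2.2 ▸ (hv v hv').symm)
    have hd : Disjoint (A.filter (fun v => v j = u j + 1)) (A.filter (fun v => v j = u j + 3)) := by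
      rw [Finset.disjoint_left]
      intro v h1 h2
      exact D.2.2.1 ((Finset.mem_filter.1 h1).2.symm.trans (Finset.mem_filter.1 h2).2)
    have hc := Finset.card_le_card (Finset.union_subset
      (Finset.filter_subset (fun v => v j = u j + 1) A) (Finset.filter_subset (fun v => v j = u j + 3) A))
    rw [Finset.card_union_of_disjoint hd] at hc
    have p1 : ∀ c, Function.update u j c ∈ A → 1 ≤ (A.filter (fun v => v j = c)).card := by
      intro c hc
      exact Finset.card_pos.2 ⟨_, Finset.mem_filter.2 ⟨hc, by simp⟩⟩
    rcases e1 with e1 | e1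
    · rcases e3 with e3 | e3
      · have := twin_not hA e1 e3 j (fun t ht => by simp [ht])
        have := congrFun this j
        simp only [Function.update_self] at this
        exact D.2.2.1 this
      · have := p1 _ e1
        omega
    · rcases e3 with e3 | e3
      · have := p1 _ e3
        omega
      · omega
  · have hv : ∀ v ∈ A, v j = u j ∨ v j = u' j := fun v hv =>
      lett_two _ _ _ h1 h2 (hm v hv j) (hm' v hv j)
    have a1 := side hA hm h j (u' j) h1 h2 hv v0 hv0
    have a2 := side hA hm' h' j (u j) h3 h4 (fun v hv' => (hv v hv').symm) v0 hv0
    exact h3 (a1.symm.trans a2)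

end KC


namespace KC
variable {d : ℕ}

open Classical in
/-- indicator function of the union of a family -/
noncomputable def ind (A : Finset (Fin d → ZMod 4)) (x : Fin d → ZMod 4) : ℤ := if Cov A x then 1 else 0

/-- weight of a family -/
def wt (w : Fin d → ZMod 4 → ℤ) (A : Finset (Fin d → ZMod 4)) : ℤ :=
  ∑ v ∈ A, ∏ j, (w j (v j) + w j (v j + 1))

theorem sum_L (f : ZMod 4 → ℤ) (a : ZMod 4) : (∑ p, if L a p then f p else 0) = f a + f (a + 1) := by
  have h : ∀ g : ZMod 4 → ℤ, ∑ p, g p = g 0 + g 1 + g 2 + g 3 := fun g => Fin.sum_univ_four g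
  rw [h]
  have : ∀ a : ZMod 4, a = 0 ∨ a = 1 ∨ a = 2 ∨ a = 3 := by decide
  rcases this a with rfl | rfl | rfl | rfl
  · rw [if_pos (by decide), if_pos (by decide), if_neg (by decide), if_neg (by decide)]
    simp
  · rw [if_neg (by decide), if_pos (by decide), if_pos (by decide), if_neg (by decide)]
    have : (1 + 1 : ZMod 4) = 2 := by decide
    simp [this]
  · rw [if_neg (by decide), if_neg (by decide), if_pos (by decide), if_pos (by decide)]
    have : (2 + 1 : ZMod 4) = 3 := by decide
    simp [this]
  · rw [if_pos (by decide), if_neg (by decide), if_neg (by decide), if_pos (by decide)]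
    have : (3 + 1 : ZMod 4) = 0 := by decide
    simp [this, add_comm]

open Classical in
theorem sum_mem (w : Fin d → ZMod 4 → ℤ) (v : Fin d → ZMod 4) :
    (∑ x : Fin d → ZMod 4, if Mem v x then ∏ j, w j (x j) else 0) = ∏ j, (w j (v j) + w j (v j + 1)) := by
  have h1 : ∀ x : Fin d → ZMod 4, (if Mem v x then ∏ j, w j (x j) else 0) =
      ∏ j, (if L (v j) (x j) then w j (x j) else 0) := by
    intro x
    split_ifs with h
    · exact Finset.prod_congr rfl fun j _ => (if_pos (h j)).symm
    · unfold Mem at h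
      push Not at h
      obtain ⟨j, hj⟩ := h
      exact (Finset.prod_eq_zero (Finset.mem_univ j) (if_neg hj)).symm
  rw [Finset.sum_congr rfl fun x _ => h1 x]
  have := Finset.prod_univ_sum (fun _ : Fin d => (Finset.univ : Finset (ZMod 4)))
    (fun j p => if L (v j) p then w j p else 0)
  rw [Fintype.piFinset_univ] at this
  rw [← this]
  exact Finset.prod_congr rfl fun j _ => sum_L _ _

open Classical in
theorem ind_eq {A : Finset (Fin d → ZMod 4)} (hA : Code A) (x : Fin d → ZMod 4) :
    ind A x = ∑ v ∈ A, if Mem v x then 1 else 0 := by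
  unfold ind
  split_ifs with h
  · obtain ⟨v, hv, hvx⟩ := h
    rw [Finset.sum_eq_single v]
    · rw [if_pos hvx]
    · intro u hu hne
      exact if_neg fun hux => hne (hA.uniq hu hv hux hvx)
    · exact fun h => absurd hv h
  · exact (Finset.sum_eq_zero fun v hv => if_neg fun hvx => h ⟨v, hv, hvx⟩).symm

theorem wt_eq {A : Finset (Fin d → ZMod 4)} (hA : Code A) (w : Fin d → ZMod 4 → ℤ) :
    ∑ x : Fin d → ZMod 4, ind A x * ∏ j, w j (x j) = wt w A := by
  classical
  unfold wt
  simp_rw [← sum_mem, ind_eq hA, Finset.sum_mul]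
  rw [Finset.sum_comm]
  refine Finset.sum_congr rfl fun v _ => Finset.sum_congr rfl fun x _ => ?_
  split_ifs <;> simp

theorem wt_add {A B C D : Finset (Fin d → ZMod 4)} (hA : Code A) (hB : Code B) (hC : Code C)
    (hD : Code D) (h : ∀ x, ind A x + ind B x = ind C x + ind D x) (w : Fin d → ZMod 4 → ℤ) :
    wt w A + wt w B = wt w C + wt w D := by
  rw [← wt_eq hA, ← wt_eq hB, ← wt_eq hC, ← wt_eq hD, ← Finset.sum_add_distrib,
    ← Finset.sum_add_distrib]
  refine Finset.sum_congr rfl fun x _ => ?_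
  rw [← add_mul, ← add_mul, h x]

theorem wt_one (A : Finset (Fin d → ZMod 4)) : wt (fun _ _ => 1) A = 2 ^ d * (A.card : ℤ) := by
  unfold wt
  simp [mul_comm]

theorem card_add {A B C D : Finset (Fin d → ZMod 4)} (hA : Code A) (hB : Code B) (hC : Code C)
    (hD : Code D) (h : ∀ x, ind A x + ind B x = ind C x + ind D x) :
    A.card + B.card = C.card + D.card := by
  have := wt_add hA hB hC hD h (fun _ _ => 1)
  simp only [wt_one] at this
  rw [← mul_add, ← mul_add] at this
  have := mul_left_cancel₀ (by positivity) this
  exact_mod_cast this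

structure Cfg (P R P' R' Q S Q' S' : Finset (Fin d → ZMod 4)) : Prop where
  cP : Code P
  cR : Code R
  cP' : Code P'
  cR' : Code R'
  cQ : Code Q
  cS : Code S
  cQ' : Code Q'
  cS' : Code S'
  PR : ∀ u ∈ P, ∀ v ∈ R, Dj u v
  RP' : ∀ u ∈ R, ∀ v ∈ P', Dj u v
  PRb : ∀ u ∈ P', ∀ v ∈ R', Dj u v
  R'P : ∀ u ∈ R', ∀ v ∈ P, Dj u v
  QS : ∀ u ∈ Q, ∀ v ∈ S, Dj u v
  SQ' : ∀ u ∈ S, ∀ v ∈ Q', Dj u v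
  QSb : ∀ u ∈ Q', ∀ v ∈ S', Dj u v
  S'Q : ∀ u ∈ S', ∀ v ∈ Q, Dj u v
  c0 : ∀ x, Cov P x ∨ Cov R x ↔ Cov Q x ∨ Cov S x
  c1 : ∀ x, Cov R x ∨ Cov P' x ↔ Cov S x ∨ Cov Q' x
  c2 : ∀ x, Cov P' x ∨ Cov R' x ↔ Cov Q' x ∨ Cov S' x
  c3 : ∀ x, Cov R' x ∨ Cov P x ↔ Cov S' x ∨ Cov Q x
  tP : ∀ u ∈ P, u ∉ P'
  tR : ∀ u ∈ R, u ∉ R'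
  tQ : ∀ u ∈ Q, u ∉ Q'
  tS : ∀ u ∈ S, u ∉ S'
  PQ : ∀ u ∈ P, u ∉ Q
  RS : ∀ u ∈ R, u ∉ S
  PQb : ∀ u ∈ P', u ∉ Q'
  RSb : ∀ u ∈ R', u ∉ S'

theorem Dj.cov {A B : Finset (Fin d → ZMod 4)} (h : ∀ u ∈ A, ∀ v ∈ B, Dj u v) {x : Fin d → ZMod 4} :
    ¬ (Cov A x ∧ Cov B x) := by
  rintro ⟨⟨u, hu, hux⟩, ⟨v, hv, hvx⟩⟩
  exact (h u hu v hv).not_mem hux hvx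

namespace Cfg
variable {P R P' R' Q S Q' S' : Finset (Fin d → ZMod 4)}

theorem rot (h : Cfg P R P' R' Q S Q' S') : Cfg R P' R' P S Q' S' Q where
  cP := h.cR
  cR := h.cP'
  cP' := h.cR'
  cR' := h.cP
  cQ := h.cS
  cS := h.cQ'
  cQ' := h.cS'
  cS' := h.cQ
  PR := h.RP'
  RP' := h.PRb
  PRb := h.R'P
  R'P := h.PR
  QS := h.SQ'
  SQ' := h.QSb
  QSb := h.S'Q
  S'Q := h.QS
  c0 := h.c1
  c1 := h.c2
  c2 := h.c3
  c3 := h.c0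
  tP := h.tR
  tR := fun u hu h2 => h.tP u h2 hu
  tQ := h.tS
  tS := fun u hu h2 => h.tQ u h2 hu
  PQ := h.RS
  RS := h.PQb
  PQb := h.RSb
  RSb := h.PQ

theorem swap (h : Cfg P R P' R' Q S Q' S') : Cfg Q S Q' S' P R P' R' where
  cP := h.cQ
  cR := h.cS
  cP' := h.cQ'
  cR' := h.cS'
  cQ := h.cP
  cS := h.cR
  cQ' := h.cP'
  cS' := h.cR'
  PR := h.QS
  RP' := h.SQ'
  PRb := h.QSb
  R'P := h.S'Q
  QS := h.PR
  SQ' := h.RP'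
  QSb := h.PRb
  S'Q := h.R'P
  c0 := fun x => (h.c0 x).symm
  c1 := fun x => (h.c1 x).symm
  c2 := fun x => (h.c2 x).symm
  c3 := fun x => (h.c3 x).symm
  tP := h.tQ
  tR := h.tS
  tQ := h.tP
  tS := h.tR
  PQ := fun u hu h2 => h.PQ u h2 hu
  RS := fun u hu h2 => h.RS u h2 hu
  PQb := fun u hu h2 => h.PQb u h2 hu
  RSb := fun u hu h2 => h.RSb u h2 hu

/-- reflection of the cyclic order fixing the odd letters -/
theorem refl (h : Cfg P R P' R' Q S Q' S') : Cfg P' R P R' Q' S Q S' where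
  cP := h.cP'
  cR := h.cR
  cP' := h.cP
  cR' := h.cR'
  cQ := h.cQ'
  cS := h.cS
  cQ' := h.cQ
  cS' := h.cS'
  PR := fun u hu v hv => (h.RP' v hv u hu).symm
  RP' := fun u hu v hv => (h.PR v hv u hu).symm
  PRb := fun u hu v hv => (h.R'P v hv u hu).symm
  R'P := fun u hu v hv => (h.PRb v hv u hu).symm
  QS := fun u hu v hv => (h.SQ' v hv u hu).symm
  SQ' := fun u hu v hv => (h.QS v hv u hu).symm
  QSb := fun u hu v hv => (h.S'Q v hv u hu).symm
  S'Q := fun u hu v hv => (h.QSb v hv u hu).symm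
  c0 := fun x => by rw [or_comm, h.c1 x, or_comm]
  c1 := fun x => by rw [or_comm, h.c0 x, or_comm]
  c2 := fun x => by rw [or_comm, h.c3 x, or_comm]
  c3 := fun x => by rw [or_comm, h.c2 x, or_comm]
  tP := fun u hu h2 => h.tP u h2 hu
  tR := h.tR
  tQ := fun u hu h2 => h.tQ u h2 hu
  tS := h.tS
  PQ := h.PQb
  RS := h.RS
  PQb := h.PQ
  RSb := h.RSb

/-- all pointwise propositional information -/
theorem pt (h : Cfg P R P' R' Q S Q' S') (x : Fin d → ZMod 4) :
    (Cov P x ∧ ¬ Cov Q x ∧ Cov P' x ∧ ¬ Cov Q' x ∧ Cov S x ∧ Cov S' x ∧ ¬ Cov R x ∧ ¬ Cov R' x) ∨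
    (¬ Cov P x ∧ Cov Q x ∧ ¬ Cov P' x ∧ Cov Q' x ∧ ¬ Cov S x ∧ ¬ Cov S' x ∧ Cov R x ∧ Cov R' x) ∨
    ((Cov P x ↔ Cov Q x) ∧ (Cov P' x ↔ Cov Q' x) ∧ (Cov R x ↔ Cov S x) ∧ (Cov R' x ↔ Cov S' x) ∧
      ¬ (Cov P x ∧ Cov R x) ∧ ¬ (Cov R x ∧ Cov P' x) ∧ ¬ (Cov P' x ∧ Cov R' x) ∧
      ¬ (Cov R' x ∧ Cov P x)) := by
  have a1 := Dj.cov h.PR (x := x)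
  have a2 := Dj.cov h.RP' (x := x)
  have a3 := Dj.cov h.PRb (x := x)
  have a4 := Dj.cov h.R'P (x := x)
  have b1 := Dj.cov h.QS (x := x)
  have b2 := Dj.cov h.SQ' (x := x)
  have b3 := Dj.cov h.QSb (x := x)
  have b4 := Dj.cov h.S'Q (x := x)
  have c0 := h.c0 x
  have c1 := h.c1 x
  have c2 := h.c2 x
  have c3 := h.c3 x
  by_cases hP : Cov P x <;> by_cases hQ : Cov Q x <;> by_cases hP' : Cov P' x <;>
    by_cases hQ' : Cov Q' x <;> simp only [hP, hQ, hP', hQ'] at * <;> grind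

theorem card1 (h : Cfg P R P' R' Q S Q' S') : P.card + Q'.card = P'.card + Q.card := by
  refine card_add h.cP h.cQ' h.cP' h.cQ fun x => ?_
  have := h.pt x
  unfold ind
  split_ifs <;> simp_all

theorem card2 (h : Cfg P R P' R' Q S Q' S') : R.card + S'.card = R'.card + S.card := h.rot.card1

theorem wtSR (h : Cfg P R P' R' Q S Q' S') (w : Fin d → ZMod 4 → ℤ) :
    wt w S' + wt w Q = wt w P + wt w R' := by
  refine wt_add h.cS' h.cQ h.cP h.cR' (fun x => ?_) w
  have := h.pt x
  unfold ind
  split_ifs <;> simp_all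

end Cfg
end KC


namespace KC
variable {d : ℕ}

theorem notcov {A : Finset (Fin d → ZMod 4)} (hA : Code A) (h4 : A.card ≤ 4) {u : Fin d → ZMod 4}
    (hu : u ∉ A) : ∃ x, Mem u x ∧ ¬ Cov A x := by
  by_contra h
  push Not at h
  have := cover5' hA hu h
  omega

theorem cov_filter {A : Finset (Fin d → ZMod 4)} {s x : Fin d → ZMod 4} (hx : Mem s x) :
    Cov (A.filter (fun v => Mt v s)) x ↔ Cov A x := by
  constructor
  · rintro ⟨v, hv, h⟩
    exact ⟨v, (Finset.mem_filter.1 hv).1, h⟩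
  · rintro ⟨v, hv, h⟩
    exact ⟨v, Finset.mem_filter.2 ⟨hv, Mt.of_point h hx⟩, h⟩

theorem trace2 {A B : Finset (Fin d → ZMod 4)} (hB : Code B)
    (hAB : ∀ u ∈ A, u ∉ B) (h4 : B.card ≤ 4) {s x0 : Fin d → ZMod 4}
    (h : ∀ x, Mem s x → (Cov A x ↔ Cov B x)) (hx0 : Mem s x0) (hx1 : Cov A x0) :
    2 ≤ (A.filter (fun v => Mt v s)).card := by
  by_contra hlt
  obtain ⟨p, hp, hpx⟩ := hx1
  have hpF : p ∈ A.filter (fun v => Mt v s) := Finset.mem_filter.2 ⟨hp, Mt.of_point hpx hx0⟩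
  have huniq : ∀ v ∈ A, Mt v s → v = p := fun v hv hvs =>
    Finset.card_le_one.1 (by omega) v (Finset.mem_filter.2 ⟨hv, hvs⟩) p hpF
  rcases c5 s _ (B.filter (fun v => Mt v s)) rfl (hB.mono (Finset.filter_subset _ _)) p
    (fun v hv => (Finset.mem_filter.1 hv).2) (Finset.mem_filter.1 hpF).2 (fun x hx => by
      rw [cov_filter hx, ← h x hx]
      constructor
      · rintro ⟨v, hv, hvx⟩
        rwa [huniq v hv (Mt.of_point hvx hx)] at hvx
      · exact fun hpx => ⟨p, hp, hpx⟩) with h1 | h1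
  · have : p ∈ B.filter (fun v => Mt v s) := by rw [h1]; simp
    exact hAB p hp (Finset.mem_filter.1 this).1
  · have := Finset.card_le_card (Finset.filter_subset (fun v => Mt v s) B)
    omega

namespace Cfg
variable {P R P' R' Q S Q' S' : Finset (Fin d → ZMod 4)}

theorem step1aux (h : Cfg P R P' R' Q S Q' S') (h5 : P.card ≤ 5)
    (hno : ∀ x, Cov Q x → Cov P x) (x0 : Fin d → ZMod 4) (hp0 : Cov P x0) (hq0 : ¬ Cov Q x0)
    (hQ' : Q' = ∅) (hQ : Q ≠ ∅) : False := by
  obtain ⟨q, hq⟩ := Finset.nonempty_iff_ne_empty.2 hQ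
  have hp' : Cov P' x0 := by have := h.pt x0; grind
  obtain ⟨p', hp', -⟩ := hp'
  have hZ : ∀ x, Cov P' x → Cov P x ∧ ¬ Cov Q x := by
    intro x hx
    have h1 := h.pt x
    have h2 : ¬ Cov Q' x := by rintro ⟨v, hv, -⟩; simp [hQ'] at hv
    grind
  have e := U5 h.cP h5 (fun hh => h.PQ q hh hq) (fun hh => h.tP p' hh hp')
    (fun x hx => hno x ⟨q, hq, hx⟩) (fun x hx => (hZ x ⟨p', hp', hx⟩).1)
  exact (hZ p' ⟨p', hp', mem_self _⟩).2 ⟨q, hq, e ▸ mem_self _⟩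

theorem step1 (h : Cfg P R P' R' Q S Q' S') (h5 : P.card + Q'.card ≤ 5)
    (hno : ∀ x, Cov Q x → Cov P x) (x0 : Fin d → ZMod 4) (hp0 : Cov P x0) (hq0 : ¬ Cov Q x0) :
    False := by
  have hc := h.card1
  have hno' : ∀ x, Cov Q' x → Cov P' x := by
    intro x hx
    have h1 := h.pt x
    have h2 := hno x
    grind
  have hp' : Cov P' x0 ∧ ¬ Cov Q' x0 := by have := h.pt x0; grind
  by_cases hQ : Q = ∅
  · by_cases hQ' : Q' = ∅
    · have hZ : ∀ x, Cov P' x → Cov P x := by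
        intro x hx
        have h1 := h.pt x
        have h2 : ¬ Cov Q' x := by rintro ⟨v, hv, -⟩; simp [hQ'] at hv
        grind
      have hle : P'.card ≤ 1 := by
        rw [Finset.card_le_one]
        intro a ha b hb
        exact U5 h.cP (by omega) (fun hh => h.tP a hh ha) (fun hh => h.tP b hh hb)
          (fun x hx => hZ x ⟨a, ha, hx⟩) (fun x hx => hZ x ⟨b, hb, hx⟩)
      obtain ⟨p', hp', -⟩ := hp'.1
      have := cover5' h.cP (fun hh => h.tP p' hh hp') (fun x hx => hZ x ⟨p', hp', hx⟩)
      rw [hQ, hQ'] at hc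
      simp at hc
      omega
    · exact h.refl.step1aux (by omega) hno' x0 hp'.1 hp'.2 hQ hQ'
  · by_cases hQ' : Q' = ∅
    · exact h.step1aux (by omega) hno x0 hp0 hq0 hQ' hQ
    · obtain ⟨q, hq⟩ := Finset.nonempty_iff_ne_empty.2 hQ
      have h1 := Finset.card_pos.2 (Finset.nonempty_iff_ne_empty.2 hQ')
      have := cover5' h.cP (fun hh => h.PQ q hh hq) (fun x hx => hno x ⟨q, hq, hx⟩)
      omega

/-- on a word of `S` the families `P` and `P'` agree -/
theorem onS (h : Cfg P R P' R' Q S Q' S') {s : Fin d → ZMod 4} (hs : s ∈ S) :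
    ∀ x, Mem s x → (Cov P x ↔ Cov P' x) := by
  intro x hx
  have h1 := h.pt x
  have h2 : Cov S x := ⟨s, hs, hx⟩
  have h3 := Dj.cov h.QS (x := x)
  have h4 := Dj.cov h.SQ' (x := x)
  grind

theorem onS2 (h : Cfg P R P' R' Q S Q' S') {s : Fin d → ZMod 4} (hs : s ∈ S) (h4 : P'.card ≤ 4)
    (x0 : Fin d → ZMod 4) (hx0 : Mem s x0) (hx1 : Cov P x0) :
    2 ≤ (P.filter (fun v => Mt v s)).card :=
  trace2 h.cP' h.tP h4 (h.onS hs) hx0 hx1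

end Cfg

theorem off_type : ∀ a s : ZMod 4, a ≠ s + 2 → a + 2 ≠ s + 2 → s ≠ a ∧ s ≠ a + 2 := by decide

theorem L_either : ∀ a s p : ZMod 4, s ≠ a → s ≠ a + 2 → L s p → L a p ∨ L (a + 2) p := by decide

/-- merging twins on `s` -/
theorem merge {s a b : Fin d → ZMod 4} {k : Fin d} (h1 : s k ≠ a k) (h2 : s k ≠ a k + 2)
    (hk : b k = a k + 2) (hb : ∀ t, t ≠ k → b t = a t) (x : Fin d → ZMod 4) (hx : Mem s x) :
    (Mem a x ∨ Mem b x) ↔ Mem (Function.update a k (s k)) x := by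
  rw [mem_upd_iff]
  constructor
  · rintro (h | h)
    · exact ⟨hx k, fun t _ => h t⟩
    · exact ⟨hx k, fun t ht => hb t ht ▸ h t⟩
  · rintro ⟨h, h'⟩
    rcases L_either _ _ _ h1 h2 h with h3 | h3
    · left
      intro t
      by_cases ht : t = k
      · subst ht; exact h3
      · exact h' t ht
    · right
      intro t
      by_cases ht : t = k
      · subst ht; rw [hk]; exact h3
      · rw [hb t ht]; exact h' t ht

theorem twin_of {a b : Fin d → ZMod 4} (h : Dj a b) (hn : ¬ NT a b) :
    ∃ k, b k = a k + 2 ∧ ∀ t, t ≠ k → b t = a t := by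
  unfold NT at hn
  push Not at hn
  obtain ⟨k, hk⟩ := hn
  obtain ⟨j, hj⟩ := h
  have : j = k := by
    by_contra hne
    have := hk j hne
    rw [hj] at this
    exact ne_add2 _ this
  subst this
  exact ⟨j, hj, fun t ht => (hk t ht).symm⟩

theorem Dj.ne {a b : Fin d → ZMod 4} (h : Dj a b) : a ≠ b := by
  rintro rfl
  obtain ⟨j, hj⟩ := h
  exact ne_add2 _ hj

theorem T2 {s a b x : Fin d → ZMod 4} (hab : Dj a b) (has : Mt a s) (hbs : Mt b s) (hxs : Mt x s)
    (h : ∀ p, Mem s p → ((Mem a p ∨ Mem b p) ↔ Mem x p)) :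
    ∃ k, s k ≠ a k ∧ s k ≠ a k + 2 ∧ b k = a k + 2 ∧ x k = s k ∧
      ∀ t, t ≠ k → b t = a t ∧ x t = a t := by
  have hn : ¬ NT a b := by
    intro hn
    have hcode : Code ({a, b} : Finset (Fin d → ZMod 4)) := by
      intro u hu v hv hne
      simp only [Finset.mem_insert, Finset.mem_singleton] at hu hv
      rcases hu with rfl | rfl <;> rcases hv with rfl | rfl
      · exact absurd rfl hne
      · exact ⟨hab, hn⟩
      · exact ⟨hab.symm, hn.symm⟩
      · exact absurd rfl hne
    have hc2 : ({a, b} : Finset (Fin d → ZMod 4)).card = 2 := Finset.card_pair hab.ne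
    rcases c5 s _ {a, b} rfl hcode x (by
      intro v hv
      simp only [Finset.mem_insert, Finset.mem_singleton] at hv
      rcases hv with rfl | rfl <;> assumption) hxs (by
      intro p hp
      rw [← h p hp]
      simp [Cov]) with h1 | h1
    · rw [h1] at hc2; simp at hc2
    · omega
  obtain ⟨k, hk, hoff⟩ := twin_of hab hn
  obtain ⟨s1, s2⟩ := off_type (a k) (s k) (has k) (hk ▸ hbs k)
  have hx : Function.update a k (s k) = x := by
    refine trace_eq (has.upd (ne_add2 _)) hxs fun p hp => ?_
    rw [← h p hp, merge s1 s2 hk hoff p hp]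
  refine ⟨k, s1, s2, hk, by rw [← hx]; simp, fun t ht => ⟨hoff t ht, by rw [← hx]; simp [ht]⟩⟩

def OL (s x y : Fin d → ZMod 4) (N : Finset (Fin d → ZMod 4)) : Prop :=
  ∃ j k : Fin d, ∃ n1 n2, N = {n1, n2} ∧ j ≠ k ∧ s j ≠ y j ∧ s j ≠ y j + 2 ∧ s k ≠ y k ∧ s k ≠ y k + 2 ∧
    x j = y j + 2 ∧ x k = s k ∧ n1 j = s j ∧ n1 k = y k ∧ n2 j = y j + 2 ∧ n2 k = y k + 2 ∧
    ∀ t, t ≠ j → t ≠ k → x t = y t ∧ n1 t = y t ∧ n2 t = y t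

def O2 (s x y : Fin d → ZMod 4) (N : Finset (Fin d → ZMod 4)) : Prop :=
  ∃ j k l : Fin d, ∃ z n1 n2, N = {z, n1, n2} ∧ j ≠ k ∧ j ≠ l ∧ k ≠ l ∧
    s j ≠ x j ∧ s j ≠ x j + 2 ∧ s k ≠ z k ∧ s k ≠ z k + 2 ∧ s l ≠ z l ∧ s l ≠ z l + 2 ∧
    x k = s k ∧ x l = z l ∧
    y j = x j + 2 ∧ y k = z k ∧ y l = s l ∧
    z j = s j ∧
    n1 j = x j ∧ n1 k = z k + 2 ∧ n1 l = z l ∧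
    n2 j = x j + 2 ∧ n2 k = z k ∧ n2 l = z l + 2 ∧
    ∀ t, t ≠ j → t ≠ k → t ≠ l → x t = z t ∧ y t = z t ∧ n1 t = z t ∧ n2 t = z t

def O3 (s x y : Fin d → ZMod 4) (N : Finset (Fin d → ZMod 4)) : Prop :=
  ∃ j k l : Fin d, ∃ n0 n1 n2, N = {n0, n1, n2} ∧ j ≠ k ∧ j ≠ l ∧ k ≠ l ∧
    s j ≠ y j ∧ s j ≠ y j + 2 ∧ s k ≠ y k ∧ s k ≠ y k + 2 ∧ s l ≠ y l ∧ s l ≠ y l + 2 ∧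
    x j = y j + 2 ∧ x k = s k ∧ x l = s l ∧
    n0 j = s j ∧ n0 k = y k ∧ n0 l = y l ∧
    n1 j = y j + 2 ∧ n1 k = y k + 2 ∧ n1 l = y l ∧
    n2 j = y j + 2 ∧ n2 k = s k ∧ n2 l = y l + 2 ∧
    ∀ t, t ≠ j → t ≠ k → t ≠ l → x t = y t ∧ n0 t = y t ∧ n1 t = y t ∧ n2 t = y t

end KC


namespace KC
variable {d : ℕ}

theorem lett_s : ∀ x s n : ZMod 4, s ≠ x → s ≠ x + 2 → n ≠ s + 2 → n = s ∨ n = x ∨ n = x + 2 := by decide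

theorem common_pt : ∀ x s : ZMod 4, s ≠ x → s ≠ x + 2 → ∃ p, L s p ∧ L x p := by decide

/-- the part of `N` with letter `s j` when letter `y j` is absent -/
theorem Ns_eq {s x y : Fin d → ZMod 4} {N : Finset (Fin d → ZMod 4)} (hN : Code N) (h3 : N.card ≤ 3)
    (hNs : ∀ n ∈ N, Mt n s) (hys : Mt y s)
    (h : ∀ p, Mem s p → (Cov N p ↔ (Mem x p ∨ Mem y p)))
    (j : Fin d) (hj : y j = x j + 2) (s1 : s j ≠ x j) (s2 : s j ≠ x j + 2) (hy : ∀ n ∈ N, n j ≠ y j) :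
    N.filter (fun n => n j = s j) = {Function.update y j (s j)} := by
  have s3 : s j ≠ y j := hj ▸ s2
  have s4 : s j ≠ y j + 2 := by rw [hj, add22]; exact s1
  rcases c5 s _ (N.filter (fun n => n j = s j)) rfl (hN.mono (Finset.filter_subset _ _))
    (Function.update y j (s j)) (fun v hv => hNs v (Finset.mem_filter.1 hv).1)
    (hys.upd (ne_add2 _)) (by
      intro p hp
      obtain ⟨q, hq1, hq2⟩ := common_pt (y j) (s j) s3 s4
      have hp' : Mem s (Function.update p j q) := hp.update hq1
      have hx : ¬ Mem x (Function.update p j q) := by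
        intro hx
        have := (mem_upd_pt_iff.1 hx).1
        rw [hj] at hq2
        exact L_compl _ _ this hq2
      have := h _ hp'
      simp only [hx, false_or] at this
      rw [mem_upd_iff]
      constructor
      · rintro ⟨v, hv, hvp⟩
        have hv' := Finset.mem_filter.1 hv
        have h1 := this.1 ⟨v, hv'.1, hvp.update (by rw [hv'.2]; exact hq1)⟩
        exact ⟨hp j, (mem_upd_pt_iff.1 h1).2⟩
      · rintro ⟨-, h1⟩
        obtain ⟨v, hv, hvp⟩ := this.2 (mem_upd_pt_iff.2 ⟨hq2, h1⟩)
        rw [mem_upd_pt_iff] at hvp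
        have hvj : v j = s j := by
          rcases lett_s (x j) (s j) (v j) s1 s2 (hNs v hv j) with h2 | h2 | h2
          · exact h2
          · exfalso
            rw [h2] at hvp
            rw [hj] at hq2
            exact L_compl _ _ hvp.1 hq2
          · exact absurd (h2.trans hj.symm) (hy v hv)
        refine ⟨v, Finset.mem_filter.2 ⟨hv, hvj⟩, fun t => ?_⟩
        by_cases ht : t = j
        · subst ht; rw [hvj]; exact hp t
        · exact hvp.2 t ht) with h1 | h1
  · exact h1
  · have := Finset.card_le_card (Finset.filter_subset (fun n => n j = s j) N)
    omega

theorem Dj_upd {z n : Fin d → ZMod 4} {j : Fin d} (h : Dj z n) (hj : n j ≠ z j + 2) (a : ZMod 4) :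
    Dj (Function.update z j a) n := by
  obtain ⟨t, ht⟩ := h
  have : t ≠ j := by rintro rfl; exact hj ht
  exact ⟨t, by simpa [this] using ht⟩

theorem SLA {s x y : Fin d → ZMod 4} {N : Finset (Fin d → ZMod 4)} (hN : Code N) (h3 : N.card ≤ 3)
    (h2 : 2 ≤ N.card)
    (hNs : ∀ n ∈ N, Mt n s) (hxs : Mt x s) (hys : Mt y s)
    (h : ∀ p, Mem s p → (Cov N p ↔ (Mem x p ∨ Mem y p)))
    (j : Fin d) (hj : y j = x j + 2) (s1 : s j ≠ x j) (s2 : s j ≠ x j + 2) (hy : ∀ n ∈ N, n j ≠ y j) :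
    (OL s x y N ∧ N.card = 2) ∨ (O3 s x y N ∧ N.card = 3) := by
  have hxy : x j = y j + 2 := by rw [hj, add22]
  have s3 : s j ≠ y j := hj ▸ s2
  have s4 : s j ≠ y j + 2 := by rw [hj, add22]; exact s1
  have hF := Ns_eq hN h3 hNs hys h j hj s1 s2 hy
  set z := Function.update y j (s j) with hz
  have hzN : z ∈ N ∧ z j = s j := by
    have : z ∈ N.filter (fun n => n j = s j) := by rw [hF]; simp
    exact Finset.mem_filter.1 this
  set a := Function.update z j (x j) with ha
  have haj : a j = x j := by simp [ha]
  have hat : ∀ t, t ≠ j → a t = y t := by intro t ht; simp [ha, hz, ht]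
  have hzt : ∀ t, t ≠ j → z t = y t := by intro t ht; simp [hz, ht]
  have has : Mt a s := (hNs z hzN.1).upd (hxs j)
  -- the other words
  have hother : ∀ n ∈ N, n ≠ z → n j = x j ∧ Dj a n := by
    intro n hn hne
    have hnj : n j = x j := by
      rcases lett_s (x j) (s j) (n j) s1 s2 (hNs n hn j) with e | e | e
      · exfalso
        have : n ∈ N.filter (fun n => n j = s j) := Finset.mem_filter.2 ⟨hn, e⟩
        rw [hF, Finset.mem_singleton] at this
        exact hne this
      · exact e
      · exact absurd (e.trans hj.symm) (hy n hn)
    refine ⟨hnj, Dj_upd (hN z hzN.1 n hn (Ne.symm hne)).1 ?_ _⟩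
    rw [hnj, hzN.2]
    exact hxs j
  -- partition of x
  have hpart : ∀ p, Mem s p → (Mem x p ↔ (Mem a p ∨ ∃ n ∈ N, n ≠ z ∧ Mem n p)) := by
    intro p hp
    by_cases hpx : L (x j) (p j)
    · have hy' : ¬ Mem y p := fun hy' => L_compl _ _ hpx (hj ▸ hy' j)
      have := h p hp
      simp only [hy', or_false] at this
      rw [← this]
      constructor
      · rintro ⟨n, hn, hnp⟩
        by_cases hne : n = z
        · left
          rw [hne] at hnp
          rw [ha, mem_upd_iff]
          exact ⟨hpx, fun t _ => hnp t⟩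
        · exact Or.inr ⟨n, hn, hne, hnp⟩
      · rintro (h1 | ⟨n, hn, -, hnp⟩)
        · rw [ha, mem_upd_iff] at h1
          refine ⟨z, hzN.1, fun t => ?_⟩
          by_cases ht : t = j
          · subst ht; rw [hzN.2]; exact hp t
          · exact h1.2 t ht
        · exact ⟨n, hn, hnp⟩
    · constructor
      · intro h1; exact absurd (h1 j) hpx
      · rintro (h1 | ⟨n, hn, hne, hnp⟩)
        · exact absurd (haj ▸ h1 j) hpx
        · exact absurd ((hother n hn hne).1 ▸ hnp j) hpx
  have hcE : (N.erase z).card + 1 = N.card := Finset.card_erase_add_one hzN.1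
  have hNE : insert z (N.erase z) = N := Finset.insert_erase hzN.1
  have hmE : ∀ n, n ∈ N.erase z ↔ n ≠ z ∧ n ∈ N := fun n => Finset.mem_erase
  have hc12 : (N.erase z).card = 1 ∨ (N.erase z).card = 2 := by omega
  rcases hc12 with hc | hc
  · left
    refine ⟨?_, by omega⟩
    obtain ⟨n, hn⟩ := Finset.card_eq_one.1 hc
    have hnN : n ≠ z ∧ n ∈ N := (hmE n).1 (by rw [hn]; simp)
    have hall : ∀ m ∈ N, m ≠ z → m = n := by
      intro m hm hne
      have := (hmE m).2 ⟨hne, hm⟩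
      rwa [hn, Finset.mem_singleton] at this
    have ho := hother n hnN.2 hnN.1
    obtain ⟨k, k1, k2, k3, k4, k5⟩ := T2 ho.2 has (hNs n hnN.2) hxs (by
      intro p hp
      rw [hpart p hp]
      constructor
      · rintro (h1 | h1)
        · exact Or.inl h1
        · exact Or.inr ⟨n, hnN.2, hnN.1, h1⟩
      · rintro (h1 | ⟨m, hm, hne, h1⟩)
        · exact Or.inl h1
        · exact Or.inr (hall m hm hne ▸ h1))
    have hkj : k ≠ j := by
      rintro rfl
      rw [haj, ho.1] at k3
      exact ne_add2 _ k3
    rw [hat k hkj] at k1 k2 k3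
    refine ⟨j, k, z, n, by rw [← hNE, hn], hkj.symm, s3, s4, k1, k2, hxy, k4, hzN.2, hzt k hkj,
      by rw [ho.1, hxy], k3, fun t ht htk => ?_⟩
    have := k5 t htk
    rw [hat t ht] at this
    exact ⟨this.2, hzt t ht, this.1⟩
  · right
    refine ⟨?_, by omega⟩
    -- find a twin of `a`
    have key : ∀ n1 n2, N.erase z = {n1, n2} → n1 ≠ n2 → ¬ NT a n1 → O3 s x y N := by
      intro n1 n2 hn h12 hnt
      have hn1 : n1 ≠ z ∧ n1 ∈ N := (hmE n1).1 (by rw [hn]; simp)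
      have hn2 : n2 ≠ z ∧ n2 ∈ N := (hmE n2).1 (by rw [hn]; simp)
      have hall : ∀ m ∈ N, m ≠ z → m = n1 ∨ m = n2 := by
        intro m hm hne
        have := (hmE m).2 ⟨hne, hm⟩
        rwa [hn, Finset.mem_insert, Finset.mem_singleton] at this
      have o1 := hother n1 hn1.2 hn1.1
      have o2 := hother n2 hn2.2 hn2.1
      obtain ⟨k, hk, hoff⟩ := twin_of o1.2 hnt
      obtain ⟨q1, q2⟩ := off_type (a k) (s k) (has k) (hk ▸ hNs n1 hn1.2 k)
      have hkj : k ≠ j := by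
        rintro rfl
        rw [haj, o1.1] at hk
        exact ne_add2 _ hk
      set m := Function.update a k (s k) with hm
      have hms : Mt m s := has.upd (ne_add2 _)
      have hmk : m k = s k := by simp [hm]
      have hmt : ∀ t, t ≠ k → m t = a t := fun t ht => by simp [hm, ht]
      have hdm : Dj m n2 := by
        obtain ⟨t, ht⟩ := o2.2
        by_cases htk : t = k
        · subst htk
          obtain ⟨t', ht'⟩ := (hN n1 hn1.2 n2 hn2.2 h12).1
          have : t' ≠ t := by
            rintro rfl
            rw [hk, ht] at ht'
            exact ne_add2 _ ht'
          exact ⟨t', by rw [hmt t' this, ht', hoff t' this]⟩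
        · exact ⟨t, by rw [hmt t htk, ht]⟩
      obtain ⟨l, l1, l2, l3, l4, l5⟩ := T2 hdm hms (hNs n2 hn2.2) hxs (by
        intro p hp
        rw [hpart p hp, hm, ← merge q1 q2 hk hoff p hp]
        constructor
        · rintro ((h1 | h1) | h1)
          · exact Or.inl h1
          · exact Or.inr ⟨n1, hn1.2, hn1.1, h1⟩
          · exact Or.inr ⟨n2, hn2.2, hn2.1, h1⟩
        · rintro (h1 | ⟨m, hm, hne, h1⟩)
          · exact Or.inl (Or.inl h1)
          · rcases hall m hm hne with rfl | rfl
            · exact Or.inl (Or.inr h1)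
            · exact Or.inr h1)
      have hlk : l ≠ k := by
        rintro rfl
        exact l1 hmk.symm
      have hlj : l ≠ j := by
        rintro rfl
        rw [hmt l hlk, haj, o2.1] at l3
        exact ne_add2 _ l3
      rw [hmt l hlk, hat l hlj] at l1 l2 l3
      rw [hat k hkj] at q1 q2 hk
      have e1 := l5 k hlk.symm
      rw [hmk] at e1
      refine ⟨j, k, l, z, n1, n2, by rw [← hNE, hn], hkj.symm, hlj.symm, hlk.symm, s3, s4, q1, q2, l1, l2,
        hxy, e1.2, l4, hzN.2, hzt k hkj, hzt l hlj, by rw [o1.1, hxy], hk,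
        by rw [hoff l hlk, hat l hlj], by rw [o2.1, hxy], e1.1, l3, fun t ht htk htl => ?_⟩
      have e2 := l5 t htl
      rw [hmt t htk, hat t ht] at e2
      exact ⟨e2.2, hzt t ht, by rw [hoff t htk, hat t ht], e2.1⟩
    obtain ⟨n1, n2, h12, hn⟩ := Finset.card_eq_two.1 hc
    by_cases hnt1 : NT a n1
    · by_cases hnt2 : NT a n2
      · exfalso
        have hn1 : n1 ≠ z ∧ n1 ∈ N := (hmE n1).1 (by rw [hn]; simp)
        have hn2 : n2 ≠ z ∧ n2 ∈ N := (hmE n2).1 (by rw [hn]; simp)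
        have o1 := hother n1 hn1.2 hn1.1
        have o2 := hother n2 hn2.2 hn2.1
        have D12 := hN n1 hn1.2 n2 hn2.2 h12
        have hcode : Code ({a, n1, n2} : Finset (Fin d → ZMod 4)) := by
          intro u hu v hv hne
          simp only [Finset.mem_insert, Finset.mem_singleton] at hu hv
          rcases hu with rfl | rfl | rfl <;> rcases hv with rfl | rfl | rfl
          · exact absurd rfl hne
          · exact ⟨o1.2, hnt1⟩
          · exact ⟨o2.2, hnt2⟩
          · exact ⟨o1.2.symm, hnt1.symm⟩
          · exact absurd rfl hne
          · exact D12
          · exact ⟨o2.2.symm, hnt2.symm⟩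
          · exact ⟨D12.1.symm, D12.2.symm⟩
          · exact absurd rfl hne
        have hcard : ({a, n1, n2} : Finset (Fin d → ZMod 4)).card = 3 :=
          Finset.card_eq_three.2 ⟨a, n1, n2, o1.2.ne, o2.2.ne, h12, rfl⟩
        rcases c5 s _ {a, n1, n2} rfl hcode x (by
          intro v hv
          simp only [Finset.mem_insert, Finset.mem_singleton] at hv
          rcases hv with rfl | rfl | rfl
          · exact has
          · exact hNs _ hn1.2
          · exact hNs _ hn2.2) hxs (by
          intro p hp
          rw [hpart p hp]
          constructor
          · rintro ⟨v, hv, hvp⟩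
            simp only [Finset.mem_insert, Finset.mem_singleton] at hv
            rcases hv with rfl | rfl | rfl
            · exact Or.inl hvp
            · exact Or.inr ⟨_, hn1.2, hn1.1, hvp⟩
            · exact Or.inr ⟨_, hn2.2, hn2.1, hvp⟩
          · rintro (h1 | ⟨m, hm, hne, h1⟩)
            · exact ⟨a, by simp, h1⟩
            · have := (hmE m).2 ⟨hne, hm⟩
              rw [hn] at this
              exact ⟨m, Finset.mem_insert_of_mem this, h1⟩) with h1 | h1
        · rw [h1] at hcard; simp at hcard
        · omega
      · exact key n2 n1 (by rw [hn, Finset.pair_comm]) h12.symm hnt2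
    · exact key n1 n2 hn h12 hnt1

end KC


namespace KC
variable {d : ℕ}

/-- one half of the split in case all three letters occur -/
theorem SLhalf {s x y z n1 n2 : Fin d → ZMod 4} {N : Finset (Fin d → ZMod 4)}
    (hNe : ∀ n, n ∈ N ↔ n = z ∨ n = n1 ∨ n = n2)
    (hNs : ∀ n ∈ N, Mt n s) (hxs : Mt x s) (hd : Dj z n1)
    (h : ∀ p, Mem s p → (Cov N p ↔ (Mem x p ∨ Mem y p)))
    (j : Fin d) (hj : y j = x j + 2) (s1 : s j ≠ x j) (s2 : s j ≠ x j + 2)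
    (hz : z j = s j) (h1 : n1 j = x j) (h2 : n2 j = y j) :
    ∃ k, k ≠ j ∧ s k ≠ z k ∧ s k ≠ z k + 2 ∧ n1 k = z k + 2 ∧ x k = s k ∧
      ∀ t, t ≠ j → t ≠ k → n1 t = z t ∧ x t = z t := by
  have hzN : z ∈ N := by rw [hNe]; simp
  have hn1 : n1 ∈ N := by rw [hNe]; simp
  have hda : Dj (Function.update z j (x j)) n1 := Dj_upd hd (by rw [h1, hz]; exact hxs j) _
  obtain ⟨k, k1, k2, k3, k4, k5⟩ := T2 hda ((hNs z hzN).upd (hxs j)) (hNs n1 hn1) hxs (by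
    intro p hp
    by_cases hpx : L (x j) (p j)
    · have hy' : ¬ Mem y p := fun hy' => L_compl _ _ hpx (hj ▸ hy' j)
      have := h p hp
      simp only [hy', or_false] at this
      rw [← this, mem_upd_iff]
      constructor
      · rintro (⟨-, h3⟩ | h3)
        · refine ⟨z, hzN, fun t => ?_⟩
          by_cases ht : t = j
          · subst ht; rw [hz]; exact hp t
          · exact h3 t ht
        · exact ⟨n1, hn1, h3⟩
      · rintro ⟨n, hn, hnp⟩
        rcases (hNe n).1 hn with rfl | rfl | rfl
        · exact Or.inl ⟨hpx, fun t _ => hnp t⟩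
        · exact Or.inr hnp
        · exfalso
          have := hnp j
          rw [h2, hj] at this
          exact L_compl _ _ hpx this
    · rw [mem_upd_iff]
      constructor
      · rintro (⟨h3, -⟩ | h3)
        · exact absurd h3 hpx
        · exact absurd (h1 ▸ h3 j) hpx
      · intro h3; exact absurd (h3 j) hpx)
  have hkj : k ≠ j := by
    rintro rfl
    simp only [Function.update_self] at k3
    rw [h1] at k3
    exact ne_add2 _ k3
  simp only [Function.update_of_ne hkj] at k1 k2 k3
  refine ⟨k, hkj, k1, k2, k3, k4, fun t ht htk => ?_⟩
  have := k5 t htk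
  simpa [ht] using this

theorem SL {s x y : Fin d → ZMod 4} {N : Finset (Fin d → ZMod 4)} (hN : Code N) (h3 : N.card ≤ 3)
    (h2 : 2 ≤ N.card) (hNs : ∀ n ∈ N, Mt n s) (hxs : Mt x s) (hys : Mt y s) (hxN : x ∉ N)
    (hD : Dj x y) (hT : NT x y)
    (h : ∀ p, Mem s p → (Cov N p ↔ (Mem x p ∨ Mem y p))) :
    (N.card = 2 ∧ (OL s x y N ∨ OL s y x N)) ∨
    (N.card = 3 ∧ (O2 s x y N ∨ O3 s x y N ∨ O3 s y x N)) := by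
  obtain ⟨j, hj⟩ := hD
  have hxy : x j = y j + 2 := by rw [hj, add22]
  obtain ⟨s1, s2⟩ := off_type (x j) (s j) (hxs j) (hj ▸ hys j)
  have s3 : s j ≠ y j := hj ▸ s2
  have s4 : s j ≠ y j + 2 := by rw [hj, add22]; exact s1
  by_cases hy : ∀ n ∈ N, n j ≠ y j
  · rcases SLA hN h3 h2 hNs hxs hys h j hj s1 s2 hy with ⟨e, c⟩ | ⟨e, c⟩
    · exact Or.inl ⟨c, Or.inl e⟩
    · exact Or.inr ⟨c, Or.inr (Or.inl e)⟩
  by_cases hx : ∀ n ∈ N, n j ≠ x j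
  · rcases SLA hN h3 h2 hNs hys hxs (fun p hp => by rw [h p hp, or_comm]) j hxy s3 s4 hx with
      ⟨e, c⟩ | ⟨e, c⟩
    · exact Or.inl ⟨c, Or.inr e⟩
    · exact Or.inr ⟨c, Or.inr (Or.inr e)⟩
  by_cases hs : ∀ n ∈ N, n j ≠ s j
  · exfalso
    rcases c5 s _ (N.filter (fun n => n j = x j)) rfl (hN.mono (Finset.filter_subset _ _)) x
      (fun v hv => hNs v (Finset.mem_filter.1 hv).1) hxs (by
        intro p hp
        constructor
        · rintro ⟨v, hv, hvp⟩
          have hv' := Finset.mem_filter.1 hv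
          rcases (h p hp).1 ⟨v, hv'.1, hvp⟩ with e | e
          · exact e
          · exfalso
            have e1 := hvp j
            have e2 := e j
            rw [hv'.2] at e1
            rw [hj] at e2
            exact L_compl _ _ e1 e2
        · intro hxp
          obtain ⟨v, hv, hvp⟩ := (h p hp).2 (Or.inl hxp)
          refine ⟨v, Finset.mem_filter.2 ⟨hv, ?_⟩, hvp⟩
          rcases lett_s (x j) (s j) (v j) s1 s2 (hNs v hv j) with e | e | e
          · exact absurd e (hs v hv)
          · exact e
          · exfalso
            have e1 := hvp j
            rw [e] at e1
            exact L_compl _ _ (hxp j) e1) with e | e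
    · have : x ∈ N.filter (fun n => n j = x j) := by rw [e]; simp
      exact hxN (Finset.mem_filter.1 this).1
    · have := Finset.card_le_card (Finset.filter_subset (fun n => n j = x j) N)
      omega
  push Not at hx hy hs
  obtain ⟨n1, hn1, e1⟩ := hx
  obtain ⟨n2, hn2, e2⟩ := hy
  obtain ⟨z, hz, ez⟩ := hs
  have z1 : z ≠ n1 := by rintro rfl; exact s1 (ez.symm.trans e1)
  have z2 : z ≠ n2 := by rintro rfl; exact s3 (ez.symm.trans e2)
  have n12 : n1 ≠ n2 := by
    rintro rfl
    rw [e1, hj] at e2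
    exact ne_add2 _ e2
  have hc3 : ({z, n1, n2} : Finset (Fin d → ZMod 4)).card = 3 :=
    Finset.card_eq_three.2 ⟨z, n1, n2, z1, z2, n12, rfl⟩
  have hNeq : ({z, n1, n2} : Finset (Fin d → ZMod 4)) = N :=
    Finset.eq_of_subset_of_card_le (by
      intro v hv
      simp only [Finset.mem_insert, Finset.mem_singleton] at hv
      rcases hv with rfl | rfl | rfl <;> assumption) (by omega)
  have hNe : ∀ n, n ∈ N ↔ n = z ∨ n = n1 ∨ n = n2 := by
    intro n; rw [← hNeq]; simp
  obtain ⟨k, kj, k1, k2, k3, k4, k5⟩ := SLhalf hNe hNs hxs (hN z hz n1 hn1 z1).1 h j hj s1 s2 ez e1 e2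
  obtain ⟨l, lj, l1, l2, l3, l4, l5⟩ := SLhalf (n1 := n2) (n2 := n1) (x := y) (y := x)
    (fun n => by rw [hNe n]; grind) hNs hys (hN z hz n2 hn2 z2).1
    (fun p hp => by rw [h p hp, or_comm]) j hxy s3 s4 ez e2 e1
  have hkl : k ≠ l := by
    rintro rfl
    obtain ⟨t, ht, ht2⟩ := hT j
    by_cases htk : t = k
    · subst htk; exact ht2 (k4.trans l4.symm)
    · exact ht2 ((k5 t ht htk).2.trans (l5 t ht htk).2.symm)
  right
  refine ⟨by rw [← hNeq]; exact hc3, Or.inl ?_⟩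
  refine ⟨j, k, l, z, n1, n2, hNeq.symm, kj.symm, lj.symm, hkl, s1, s2, k1, k2, l1, l2, k4,
    (k5 l lj hkl.symm).2, hj, (l5 k kj hkl).2, l4, ez, e1, k3, (k5 l lj hkl.symm).1, by rw [e2, hj],
    (l5 k kj hkl).1, l3, fun t tj tk tl => ?_⟩
  exact ⟨(k5 t tj tk).2, (l5 t tj tl).2, (k5 t tj tk).1, (l5 t tj tl).1⟩

end KC


namespace KC
variable {d : ℕ}

theorem lneq : ∀ a b : ZMod 4, b ≠ a → b ≠ a + 2 →
    (a ≠ b ∧ a ≠ b + 2 ∧ b ≠ a ∧ b ≠ a + 2 ∧ a + 2 ≠ b ∧ a + 2 ≠ b + 2 ∧ b + 2 ≠ a ∧ b + 2 ≠ a + 2 ∧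
      a ≠ a + 2 ∧ b ≠ b + 2 ∧ a + 2 ≠ a ∧ b + 2 ≠ b) := by decide

theorem quad1 : ∀ a b : ZMod 4, b ≠ a → b ≠ a + 2 → ∃ p : ZMod 4,
    (L a p ∧ L b p ∧ ¬ L (a + 2) p ∧ ¬ L (b + 2) p) ∧ (∀ t, L t p → t = a ∨ t = b) := by decide

theorem quad {a b : ZMod 4} (h1 : b ≠ a) (h2 : b ≠ a + 2) : ∃ p1 p2 p3 p4 : ZMod 4,
    (L a p1 ∧ L b p1 ∧ ¬ L (a + 2) p1 ∧ ¬ L (b + 2) p1 ∧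
     L a p2 ∧ ¬ L b p2 ∧ ¬ L (a + 2) p2 ∧ L (b + 2) p2 ∧
     ¬ L a p3 ∧ L b p3 ∧ L (a + 2) p3 ∧ ¬ L (b + 2) p3 ∧
     ¬ L a p4 ∧ ¬ L b p4 ∧ L (a + 2) p4 ∧ L (b + 2) p4) ∧
    (∀ t, L t p1 → t = a ∨ t = b) ∧ (∀ t, L t p2 → t = a ∨ t = b + 2) ∧
    (∀ t, L t p3 → t = a + 2 ∨ t = b) ∧ (∀ t, L t p4 → t = a + 2 ∨ t = b + 2) := by
  have N := lneq a b h1 h2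
  obtain ⟨p1, e1, f1⟩ := quad1 a b h1 h2
  obtain ⟨p2, e2, f2⟩ := quad1 a (b + 2) N.2.2.2.2.2.2.1 N.2.2.2.2.2.2.2.1
  obtain ⟨p3, e3, f3⟩ := quad1 (a + 2) b h2 (by rw [add22]; exact h1)
  obtain ⟨p4, e4, f4⟩ := quad1 (a + 2) (b + 2) N.2.2.2.2.2.2.2.1
    (by rw [add22]; exact N.2.2.2.2.2.2.1)
  rw [add22] at e2 e3 e4
  rw [add22] at e4
  refine ⟨p1, p2, p3, p4, ?_, f1, f2, f3, f4⟩
  grind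

/-- `v` contains `e` outside three coordinates -/
def E3 (j k l : Fin d) (e v : Fin d → ZMod 4) : Prop := ∀ t, t ≠ j → t ≠ k → t ≠ l → L (v t) (e t)

def X3 (j k l : Fin d) (e : Fin d → ZMod 4) (p q r : ZMod 4) : Fin d → ZMod 4 :=
  Function.update (Function.update (Function.update e l r) k q) j p

theorem mem3 {j k l : Fin d} (jk : j ≠ k) (jl : j ≠ l) (kl : k ≠ l) (e v : Fin d → ZMod 4)
    (p q r : ZMod 4) :
    Mem v (X3 j k l e p q r) ↔ L (v j) p ∧ L (v k) q ∧ L (v l) r ∧ E3 j k l e v := by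
  unfold X3
  constructor
  · intro h
    refine ⟨by simpa using h j, by simpa [jk.symm] using h k, by simpa [jl.symm, kl.symm] using h l, ?_⟩
    intro t h1 h2 h3
    simpa [h1, h2, h3] using h t
  · rintro ⟨h1, h2, h3, h4⟩ t
    by_cases tj : t = j
    · subst tj; simpa using h1
    by_cases tk : t = k
    · subst tk; simpa [tj] using h2
    by_cases tl : t = l
    · subst tl; simpa [tj, tk] using h3
    simpa [tj, tk, tl] using h4 t tj tk tl

theorem dj3 {j k l : Fin d} {e u v : Fin d → ZMod 4} (h : Dj u v) (hu : E3 j k l e u) (hv : E3 j k l e v) :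
    v j = u j + 2 ∨ v k = u k + 2 ∨ v l = u l + 2 := by
  obtain ⟨t, ht⟩ := h
  by_cases tj : t = j
  · subst tj; exact Or.inl ht
  by_cases tk : t = k
  · subst tk; exact Or.inr (Or.inl ht)
  by_cases tl : t = l
  · subst tl; exact Or.inr (Or.inr ht)
  have := hv t tj tk tl
  rw [ht] at this
  exact absurd this (L_compl _ _ (hu t tj tk tl))

theorem cov2 {N : Finset (Fin d → ZMod 4)} {x y : Fin d → ZMod 4} (h : N = {x, y}) (p : Fin d → ZMod 4) :
    Cov N p ↔ Mem x p ∨ Mem y p := by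
  subst h; simp [Cov]

theorem cov3 {N : Finset (Fin d → ZMod 4)} {x y z : Fin d → ZMod 4} (h : N = {x, y, z})
    (p : Fin d → ZMod 4) : Cov N p ↔ Mem x p ∨ Mem y p ∨ Mem z p := by
  subst h; simp [Cov]

theorem no3 {N : Finset (Fin d → ZMod 4)} {x y z : Fin d → ZMod 4} (h : N.card ≤ 2) (hx : x ∈ N)
    (hy : y ∈ N) (hz : z ∈ N) : x = y ∨ x = z ∨ y = z := by
  by_contra hh
  push Not at hh
  have := Finset.card_le_card (s := {x, y, z}) (t := N) (by
    intro v hv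
    simp only [Finset.mem_insert, Finset.mem_singleton] at hv
    rcases hv with rfl | rfl | rfl <;> assumption)
  rw [Finset.card_eq_three.2 ⟨x, y, z, hh.1, hh.2.1, hh.2.2, rfl⟩] at this
  omega

namespace Cfg
variable {P R P' R' Q S Q' S' : Finset (Fin d → ZMod 4)}

theorem q_of_diff (h : Cfg P R P' R' Q S Q' S') {x : Fin d → ZMod 4} (h1 : Cov P x) (h2 : ¬ Cov P' x) :
    Cov Q x := by
  have := h.pt x
  grind

theorem r_of_q (h : Cfg P R P' R' Q S Q' S') {x : Fin d → ZMod 4} (h1 : ¬ Cov P x) (h2 : Cov Q x) :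
    Cov R x := by
  have := h.pt x
  grind

theorem caseO2 (h : Cfg P R P' R' Q S Q' S') (hQ : Q.card ≤ 2) {s x y z n1 n2 : Fin d → ZMod 4}
    (hs : s ∈ S) (hP : P = {x, y}) (hP' : P' = {z, n1, n2}) (hzs : Mt z s)
    {j k l : Fin d} (jk : j ≠ k) (jl : j ≠ l) (kl : k ≠ l) (a b a1 b1 a2 b2 : ZMod 4)
    (hb : b ≠ a) (hb' : b ≠ a + 2) (hb1 : b1 ≠ a1) (hb1' : b1 ≠ a1 + 2) (hb2 : b2 ≠ a2)
    (hb2' : b2 ≠ a2 + 2) (sj : s j = b) (sk : s k = b1) (sl : s l = b2)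
    (xj : x j = a) (xk : x k = b1) (xl : x l = a2)
    (yj : y j = a + 2) (yk : y k = a1) (yl : y l = b2)
    (zj : z j = b) (zk : z k = a1) (zl : z l = a2)
    (n1j : n1 j = a) (n1k : n1 k = a1 + 2) (n1l : n1 l = a2)
    (n2j : n2 j = a + 2) (n2k : n2 k = a1) (n2l : n2 l = a2 + 2)
    (hoff : ∀ t, t ≠ j → t ≠ k → t ≠ l → x t = z t ∧ y t = z t ∧ n1 t = z t ∧ n2 t = z t) : False := by
  obtain ⟨e, hze, hse⟩ := hzs.point
  have Es : E3 j k l e s := fun t _ _ _ => hse t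
  have Ez : E3 j k l e z := fun t _ _ _ => hze t
  have Ex : E3 j k l e x := fun t h1 h2 h3 => by rw [(hoff t h1 h2 h3).1]; exact hze t
  have Ey : E3 j k l e y := fun t h1 h2 h3 => by rw [(hoff t h1 h2 h3).2.1]; exact hze t
  have En1 : E3 j k l e n1 := fun t h1 h2 h3 => by rw [(hoff t h1 h2 h3).2.2.1]; exact hze t
  have En2 : E3 j k l e n2 := fun t h1 h2 h3 => by rw [(hoff t h1 h2 h3).2.2.2]; exact hze t
  obtain ⟨p1, p2, p3, p4, F, r1, r2, r3, r4⟩ := quad hb hb'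
  obtain ⟨q1, q2, q3, q4, F1, u1, u2, u3, u4⟩ := quad hb1 hb1'
  obtain ⟨o1, o2, o3, o4, F2, w1, w2, w3, w4⟩ := quad hb2 hb2'
  have N := lneq a b hb hb'
  have N1 := lneq a1 b1 hb1 hb1'
  have N2 := lneq a2 b2 hb2 hb2'
  have hPx : x ∈ P := by rw [hP]; simp
  have hPy : y ∈ P := by rw [hP]; simp
  have hPn1 : n1 ∈ P' := by rw [hP']; simp
  have hPn2 : n2 ∈ P' := by rw [hP']; simp
  have hK : ¬ Cov Q (X3 j k l e p4 q1 o2) := by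
    intro hq
    obtain ⟨r, hr, hrx⟩ := h.r_of_q (by
      rw [cov2 hP, mem3 jk jl kl, mem3 jk jl kl, xj, xk, xl, yj, yk, yl]
      simp [F, F1, F2]) hq
    rw [mem3 jk jl kl] at hrx
    obtain ⟨e1, e2, e3, e4⟩ := hrx
    have d1 := dj3 (h.PR y hPy r hr) Ey e4
    have d2 := dj3 (h.RP' r hr n2 hPn2).symm En2 e4
    have f1 := r4 _ e1
    have f2 := u1 _ e2
    have f3 := w2 _ e3
    rw [yj, yk, yl] at d1
    rw [n2j, n2k, n2l, add22, add22] at d2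
    grind
  have hK2 : ¬ Cov Q (X3 j k l e p2 q2 o1) := by
    intro hq
    obtain ⟨r, hr, hrx⟩ := h.r_of_q (by
      rw [cov2 hP, mem3 jk jl kl, mem3 jk jl kl, xj, xk, xl, yj, yk, yl]
      simp [F, F1, F2]) hq
    rw [mem3 jk jl kl] at hrx
    obtain ⟨e1, e2, e3, e4⟩ := hrx
    have d1 := dj3 (h.PR x hPx r hr) Ex e4
    have d2 := dj3 (h.RP' r hr n1 hPn1).symm En1 e4
    have f1 := r2 _ e1
    have f2 := u2 _ e2
    have f3 := w1 _ e3
    rw [xj, xk, xl] at d1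
    rw [n1j, n1k, n1l, add22] at d2
    grind
  have hA1 : Cov Q (X3 j k l e p2 q1 o1) := by
    refine h.q_of_diff ?_ ?_
    · rw [cov2 hP, mem3 jk jl kl, mem3 jk jl kl, xj, xk, xl, yj, yk, yl]
      simp [F, F1, F2, Ex]
    · rw [cov3 hP', mem3 jk jl kl, mem3 jk jl kl, mem3 jk jl kl, zj, zk, zl, n1j, n1k, n1l, n2j, n2k, n2l]
      simp [F, F1, F2]
  have hA2 : Cov Q (X3 j k l e p2 q1 o2) := by
    refine h.q_of_diff ?_ ?_
    · rw [cov2 hP, mem3 jk jl kl, mem3 jk jl kl, xj, xk, xl, yj, yk, yl]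
      simp [F, F1, F2, Ex]
    · rw [cov3 hP', mem3 jk jl kl, mem3 jk jl kl, mem3 jk jl kl, zj, zk, zl, n1j, n1k, n1l, n2j, n2k, n2l]
      simp [F, F1, F2]
  have hB2 : Cov Q (X3 j k l e p4 q2 o1) := by
    refine h.q_of_diff ?_ ?_
    · rw [cov2 hP, mem3 jk jl kl, mem3 jk jl kl, xj, xk, xl, yj, yk, yl]
      simp [F, F1, F2, Ey]
    · rw [cov3 hP', mem3 jk jl kl, mem3 jk jl kl, mem3 jk jl kl, zj, zk, zl, n1j, n1k, n1l, n2j, n2k, n2l]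
      simp [F, F1, F2]
  obtain ⟨q, hq, hqx⟩ := hA1
  obtain ⟨q', hq', hqx'⟩ := hA2
  obtain ⟨q'', hq'', hqx''⟩ := hB2
  have K1 : ∀ q ∈ Q, E3 j k l e q → ¬ (L (q j) p4 ∧ L (q k) q1 ∧ L (q l) o2) := by
    rintro q hq hE ⟨e1, e2, e3⟩
    exact hK ⟨q, hq, by rw [mem3 jk jl kl]; exact ⟨e1, e2, e3, hE⟩⟩
  have K2 : ∀ q ∈ Q, E3 j k l e q → ¬ (L (q j) p2 ∧ L (q k) q2 ∧ L (q l) o1) := by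
    rintro q hq hE ⟨e1, e2, e3⟩
    exact hK2 ⟨q, hq, by rw [mem3 jk jl kl]; exact ⟨e1, e2, e3, hE⟩⟩
  have DS : ∀ q ∈ Q, E3 j k l e q → q j = b + 2 ∨ q k = b1 + 2 ∨ q l = b2 + 2 := by
    intro q hq hE
    have := dj3 (h.QS q hq s hs).symm Es hE
    rwa [sj, sk, sl] at this
  rw [mem3 jk jl kl] at hqx hqx' hqx''
  obtain ⟨e1, e2, e3, e4⟩ := hqx
  obtain ⟨e1', e2', e3', e4'⟩ := hqx'
  obtain ⟨e1'', e2'', e3'', e4''⟩ := hqx''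
  have g1 : q j = b + 2 := by
    have := DS q hq e4
    have := r2 _ e1
    have := u1 _ e2
    have := w1 _ e3
    grind
  have g2 : q k = b1 := by
    rcases u1 _ e2 with g | g
    · exact absurd ⟨e1, by rw [g]; exact F1.2.2.2.2.1, e3⟩ (K2 q hq e4)
    · exact g
  have g3 : q l = b2 := by
    rcases w1 _ e3 with g | g
    · exact absurd ⟨by rw [g1]; simp [F], e2, by rw [g]; simp [F2]⟩ (K1 q hq e4)
    · exact g
  have g1' : q' j = a := by
    rcases r2 _ e1' with g | g
    · exact g
    · exact absurd ⟨by rw [g]; simp [F], e2', e3'⟩ (K1 q' hq' e4')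
  have f1 := r4 _ e1''
  have f2 := u2 _ e2''
  rcases no3 hQ hq hq' hq'' with e | e | e
  · subst e
    exact N.2.2.2.2.2.2.1 (g1.symm.trans g1')
  · subst e
    rw [g2] at f2
    grind
  · subst e
    rw [g1'] at f1
    grind

theorem caseO3 (h : Cfg P R P' R' Q S Q' S') (hQ : Q.card ≤ 2) {s x y n0 n1 n2 : Fin d → ZMod 4}
    (hs : s ∈ S) (hP : P = {x, y}) (hP' : P' = {n0, n1, n2}) (hys : Mt y s)
    {j k l : Fin d} (jk : j ≠ k) (jl : j ≠ l) (kl : k ≠ l) (a b a1 b1 a2 b2 : ZMod 4)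
    (hb : b ≠ a) (hb' : b ≠ a + 2) (hb1 : b1 ≠ a1) (hb1' : b1 ≠ a1 + 2) (hb2 : b2 ≠ a2)
    (hb2' : b2 ≠ a2 + 2) (sj : s j = b) (sk : s k = b1) (sl : s l = b2)
    (xj : x j = a + 2) (xk : x k = b1) (xl : x l = b2)
    (yj : y j = a) (yk : y k = a1) (yl : y l = a2)
    (zj : n0 j = b) (zk : n0 k = a1) (zl : n0 l = a2)
    (n1j : n1 j = a + 2) (n1k : n1 k = a1 + 2) (n1l : n1 l = a2)
    (n2j : n2 j = a + 2) (n2k : n2 k = b1) (n2l : n2 l = a2 + 2)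
    (hoff : ∀ t, t ≠ j → t ≠ k → t ≠ l → x t = y t ∧ n0 t = y t ∧ n1 t = y t ∧ n2 t = y t) : False := by
  obtain ⟨e, hye, hse⟩ := hys.point
  have Es : E3 j k l e s := fun t _ _ _ => hse t
  have Ey : E3 j k l e y := fun t _ _ _ => hye t
  have Ex : E3 j k l e x := fun t h1 h2 h3 => by rw [(hoff t h1 h2 h3).1]; exact hye t
  have En1 : E3 j k l e n1 := fun t h1 h2 h3 => by rw [(hoff t h1 h2 h3).2.2.1]; exact hye t
  have En2 : E3 j k l e n2 := fun t h1 h2 h3 => by rw [(hoff t h1 h2 h3).2.2.2]; exact hye t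
  obtain ⟨p1, p2, p3, p4, F, r1, r2, r3, r4⟩ := quad hb hb'
  obtain ⟨q1, q2, q3, q4, F1, u1, u2, u3, u4⟩ := quad hb1 hb1'
  obtain ⟨o1, o2, o3, o4, F2, w1, w2, w3, w4⟩ := quad hb2 hb2'
  have N := lneq a b hb hb'
  have N1 := lneq a1 b1 hb1 hb1'
  have N2 := lneq a2 b2 hb2 hb2'
  have hPx : x ∈ P := by rw [hP]; simp
  have hPn1 : n1 ∈ P' := by rw [hP']; simp
  have hPn2 : n2 ∈ P' := by rw [hP']; simp
  have hK1 : ¬ Cov Q (X3 j k l e p4 q2 o1) := by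
    intro hq
    obtain ⟨r, hr, hrx⟩ := h.r_of_q (by
      rw [cov2 hP, mem3 jk jl kl, mem3 jk jl kl, xj, xk, xl, yj, yk, yl]
      simp [F, F1]) hq
    rw [mem3 jk jl kl] at hrx
    obtain ⟨e1, e2, e3, e4⟩ := hrx
    have d1 := dj3 (h.PR x hPx r hr) Ex e4
    have d2 := dj3 (h.RP' r hr n1 hPn1).symm En1 e4
    have f1 := r4 _ e1
    have f2 := u2 _ e2
    have f3 := w1 _ e3
    rw [xj, xk, xl, add22] at d1
    rw [n1j, n1k, n1l, add22, add22] at d2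
    grind
  have hK3 : ¬ Cov Q (X3 j k l e p4 q1 o2) := by
    intro hq
    obtain ⟨r, hr, hrx⟩ := h.r_of_q (by
      rw [cov2 hP, mem3 jk jl kl, mem3 jk jl kl, xj, xk, xl, yj, yk, yl]
      simp [F, F2]) hq
    rw [mem3 jk jl kl] at hrx
    obtain ⟨e1, e2, e3, e4⟩ := hrx
    have d1 := dj3 (h.PR x hPx r hr) Ex e4
    have d2 := dj3 (h.RP' r hr n2 hPn2).symm En2 e4
    have f1 := r4 _ e1
    have f2 := u1 _ e2
    have f3 := w2 _ e3
    rw [xj, xk, xl, add22] at d1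
    rw [n2j, n2k, n2l, add22, add22] at d2
    grind
  have hB : Cov Q (X3 j k l e p4 q1 o1) := by
    refine h.q_of_diff ?_ ?_
    · rw [cov2 hP, mem3 jk jl kl, mem3 jk jl kl, xj, xk, xl, yj, yk, yl]
      simp [F, F1, F2, Ex]
    · rw [cov3 hP', mem3 jk jl kl, mem3 jk jl kl, mem3 jk jl kl, zj, zk, zl, n1j, n1k, n1l, n2j, n2k, n2l]
      simp [F, F1, F2]
  have hC : ∀ c c', L a1 c → L a2 c' → Cov Q (X3 j k l e p2 c c') := by
    intro c c' hc hc'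
    refine h.q_of_diff ?_ ?_
    · rw [cov2 hP, mem3 jk jl kl, mem3 jk jl kl, xj, xk, xl, yj, yk, yl]
      simp [F, hc, hc', Ey]
    · rw [cov3 hP', mem3 jk jl kl, mem3 jk jl kl, mem3 jk jl kl, zj, zk, zl, n1j, n1k, n1l, n2j, n2k, n2l]
      simp [F]
  obtain ⟨q, hq, hqx⟩ := hB
  obtain ⟨q', hq', hqx'⟩ := hC q2 o1 (by simp [F1]) (by simp [F2])
  obtain ⟨q'', hq'', hqx''⟩ := hC q1 o2 (by simp [F1]) (by simp [F2])
  have K1 : ∀ q ∈ Q, E3 j k l e q → ¬ (L (q j) p4 ∧ L (q k) q2 ∧ L (q l) o1) := by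
    rintro q hq hE ⟨e1, e2, e3⟩
    exact hK1 ⟨q, hq, by rw [mem3 jk jl kl]; exact ⟨e1, e2, e3, hE⟩⟩
  have K3 : ∀ q ∈ Q, E3 j k l e q → ¬ (L (q j) p4 ∧ L (q k) q1 ∧ L (q l) o2) := by
    rintro q hq hE ⟨e1, e2, e3⟩
    exact hK3 ⟨q, hq, by rw [mem3 jk jl kl]; exact ⟨e1, e2, e3, hE⟩⟩
  have DS : ∀ q ∈ Q, E3 j k l e q → q j = b + 2 ∨ q k = b1 + 2 ∨ q l = b2 + 2 := by
    intro q hq hE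
    have := dj3 (h.QS q hq s hs).symm Es hE
    rwa [sj, sk, sl] at this
  rw [mem3 jk jl kl] at hqx hqx' hqx''
  obtain ⟨e1, e2, e3, e4⟩ := hqx
  obtain ⟨e1', e2', e3', e4'⟩ := hqx'
  obtain ⟨e1'', e2'', e3'', e4''⟩ := hqx''
  have g2 : q k = b1 := by
    rcases u1 _ e2 with g | g
    · exact absurd ⟨e1, by rw [g]; simp [F1], e3⟩ (K1 q hq e4)
    · exact g
  have g3 : q l = b2 := by
    rcases w1 _ e3 with g | g
    · exact absurd ⟨e1, e2, by rw [g]; simp [F2]⟩ (K3 q hq e4)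
    · exact g
  rcases no3 hQ hq hq' hq'' with e | e | e
  · subst e
    rw [g2] at e2'
    exact F1.2.2.2.2.2.1 e2'
  · subst e
    rw [g3] at e3''
    exact F2.2.2.2.2.2.1 e3''
  · subst e
    have f1 := r2 _ e1'
    have f2 := u2 _ e2'
    have f3 := u1 _ e2''
    have f4 := w1 _ e3'
    have f5 := w2 _ e3''
    have f6 := DS q' hq' e4'
    have f7 : q' j = b + 2 := by grind
    exact K1 q' hq' e4' ⟨by rw [f7]; simp [F], e2', e3'⟩

end Cfg
end KC


namespace KC
variable {d : ℕ}

/-- `v` contains `e` outside two coordinates -/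
def E2 (j k : Fin d) (e v : Fin d → ZMod 4) : Prop := ∀ t, t ≠ j → t ≠ k → L (v t) (e t)

def X2 (j k : Fin d) (e : Fin d → ZMod 4) (p q : ZMod 4) : Fin d → ZMod 4 :=
  Function.update (Function.update e k q) j p

theorem mem2 {j k : Fin d} (jk : j ≠ k) (e v : Fin d → ZMod 4) (p q : ZMod 4) :
    Mem v (X2 j k e p q) ↔ L (v j) p ∧ L (v k) q ∧ E2 j k e v := by
  unfold X2
  constructor
  · intro h
    refine ⟨by simpa using h j, by simpa [jk.symm] using h k, ?_⟩
    intro t h1 h2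
    simpa [h1, h2] using h t
  · rintro ⟨h1, h2, h4⟩ t
    by_cases tj : t = j
    · subst tj; simpa using h1
    by_cases tk : t = k
    · subst tk; simpa [tj] using h2
    simpa [tj, tk] using h4 t tj tk

theorem memsplit (j k : Fin d) (v p : Fin d → ZMod 4) :
    Mem v p ↔ L (v j) (p j) ∧ L (v k) (p k) ∧ E2 j k p v := by
  constructor
  · intro h
    exact ⟨h j, h k, fun t _ _ => h t⟩
  · rintro ⟨h1, h2, h4⟩ t
    by_cases tj : t = j
    · subst tj; exact h1
    by_cases tk : t = k
    · subst tk; exact h2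
    exact h4 t tj tk

theorem E2_congr {j k : Fin d} {e u v : Fin d → ZMod 4} (h : ∀ t, t ≠ j → t ≠ k → u t = v t) :
    E2 j k e u ↔ E2 j k e v :=
  ⟨fun h1 t a b => h t a b ▸ h1 t a b, fun h1 t a b => by rw [h t a b]; exact h1 t a b⟩

theorem dj2 {j k : Fin d} {e u v : Fin d → ZMod 4} (h : Dj u v) (hu : E2 j k e u) (hv : E2 j k e v) :
    v j = u j + 2 ∨ v k = u k + 2 := by
  obtain ⟨t, ht⟩ := h
  by_cases tj : t = j
  · subst tj; exact Or.inl ht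
  by_cases tk : t = k
  · subst tk; exact Or.inr ht
  have := hv t tj tk
  rw [ht] at this
  exact absurd this (L_compl _ _ (hu t tj tk))

theorem lett_s2 : ∀ a b s : ZMod 4, b ≠ a → b ≠ a + 2 → s ≠ a → s ≠ a + 2 → s = b ∨ s = b + 2 := by decide

namespace Cfg
variable {P R P' R' Q S Q' S' : Finset (Fin d → ZMod 4)}

/-- all words of `P` meet a word of `S` meeting the positive zone, when there are two of them -/
theorem all2 (h : Cfg P R P' R' Q S Q' S') (hP : P.card = 2) (hP' : P'.card ≤ 3) {s x0 : Fin d → ZMod 4}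
    (hs : s ∈ S) (hx0 : Mem s x0) (hx1 : Cov P x0) : ∀ v ∈ P, Mt v s := by
  have h2 := h.onS2 hs (by omega) x0 hx0 hx1
  have := Finset.eq_of_subset_of_card_le (Finset.filter_subset (fun v => Mt v s) P) (by omega)
  intro v hv
  rw [← this] at hv
  exact (Finset.mem_filter.1 hv).2

theorem useSL (h : Cfg P R P' R' Q S Q' S') {x y : Fin d → ZMod 4} (hP : P = {x, y}) (hxy : x ≠ y)
    (hP' : P'.card ≤ 3) {s x0 : Fin d → ZMod 4}
    (hs : s ∈ S) (hx0 : Mem s x0) (hx1 : Cov P x0) :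
    (∀ v ∈ P, Mt v s) ∧ (((P'.filter (fun v => Mt v s)).card = 2 ∧
      (OL s x y (P'.filter (fun v => Mt v s)) ∨ OL s y x (P'.filter (fun v => Mt v s)))) ∨
    ((P'.filter (fun v => Mt v s)).card = 3 ∧ (O2 s x y (P'.filter (fun v => Mt v s)) ∨
      O3 s x y (P'.filter (fun v => Mt v s)) ∨ O3 s y x (P'.filter (fun v => Mt v s))))) := by
  have hPc : P.card = 2 := by rw [hP]; exact Finset.card_pair hxy
  have hx : x ∈ P := by rw [hP]; simp
  have hy : y ∈ P := by rw [hP]; simp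
  have hall := h.all2 hPc hP' hs hx0 hx1
  refine ⟨hall, ?_⟩
  have hc := Finset.card_le_card (Finset.filter_subset (fun v => Mt v s) P')
  have h2 := h.refl.onS2 hs (by omega) x0 hx0 ((h.onS hs x0 hx0).1 hx1)
  have hD := h.cP x hx y hy hxy
  refine SL (h.cP'.mono (Finset.filter_subset _ _)) (by omega) h2
    (fun n hn => (Finset.mem_filter.1 hn).2) (hall x hx) (hall y hy)
    (fun hh => h.tP x hx (Finset.mem_filter.1 hh).1) hD.1 hD.2 (fun p hp => ?_)
  rw [cov_filter hp, ← h.onS hs p hp, cov2 hP]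

theorem caseIIL (h : Cfg P R P' R' Q S Q' S') (hP' : P'.card = 3)
    (hQ' : Q'.card ≤ 4) {s x y : Fin d → ZMod 4} (hP : P = {x, y}) (hys : Mt y s)
    (hL : OL s x y (P'.filter (fun v => Mt v s)))
    (hall : ∀ s ∈ S, ∀ x0, Mem s x0 → Cov P x0 → (∀ v ∈ P, Mt v s) ∧ (P'.filter (fun v => Mt v s)).card = 2) :
    False := by
  obtain ⟨j, k, n1, n2, hN, jk, sj1, sj2, sk1, sk2, xj, xk, n1j, n1k, n2j, n2k, hoff⟩ := hL
  have hx : x ∈ P := by rw [hP]; simp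
  have hy : y ∈ P := by rw [hP]; simp
  have n12 : n1 ≠ n2 := by
    intro e
    rw [e, n2k] at n1k
    exact ne_add2 _ n1k.symm
  have hc2 : (P'.filter (fun v => Mt v s)).card = 2 := by rw [hN]; exact Finset.card_pair n12
  have hn1 : n1 ∈ P' := by
    have : n1 ∈ P'.filter (fun v => Mt v s) := by rw [hN]; simp
    exact (Finset.mem_filter.1 this).1
  have hn2 : n2 ∈ P' := by
    have : n2 ∈ P'.filter (fun v => Mt v s) := by rw [hN]; simp
    exact (Finset.mem_filter.1 this).1
  obtain ⟨z, hz, hzs⟩ : ∃ z ∈ P', z ∉ P'.filter (fun v => Mt v s) := by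
    by_contra hh
    push Not at hh
    have := Finset.card_le_card (s := P') (t := P'.filter (fun v => Mt v s)) hh
    omega
  have hz1 : n1 ≠ z := by rintro rfl; exact hzs (by rw [hN]; simp)
  have hz2 : n2 ≠ z := by rintro rfl; exact hzs (by rw [hN]; simp)
  have hP'e : P' = {n1, n2, z} := by
    symm
    refine Finset.eq_of_subset_of_card_le ?_ ?_
    · intro v hv
      simp only [Finset.mem_insert, Finset.mem_singleton] at hv
      rcases hv with rfl | rfl | rfl <;> assumption
    · rw [hP', Finset.card_eq_three.2 ⟨n1, n2, z, n12, hz1, hz2, rfl⟩]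
  obtain ⟨x1, hx1, hx1'⟩ := notcov h.cQ' hQ' (h.PQb z hz)
  have hc1 : Cov P' x1 := ⟨z, hz, hx1⟩
  obtain ⟨hS1, hP1⟩ : Cov S x1 ∧ Cov P x1 := by
    have := h.pt x1
    grind
  obtain ⟨s1, hs1, hs1x⟩ := hS1
  obtain ⟨hm, hcs⟩ := hall s1 hs1 x1 hs1x hP1
  have mx := hm x hx
  have my := hm y hy
  have mz : Mt z s1 := Mt.of_point hx1 hs1x
  generalize ha : y j = a at *
  generalize ha1 : y k = a1 at *
  generalize hb : s j = b at *
  generalize hb1 : s k = b1 at *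
  have cj : s1 j = b ∨ s1 j = b + 2 := by
    refine lett_s2 a b _ sj1 sj2 ?_ ?_
    · intro e
      exact mx j (by rw [xj, e])
    · intro e
      exact my j (by rw [ha, e, add22])
  have ck : s1 k = a1 ∨ s1 k = b1 := by
    refine lett_two _ _ _ sk1 sk2 ?_ ?_
    · intro e
      exact my k (by rw [ha1, e, add22])
    · intro e
      exact mx k (by rw [xk, e, add22])
  have N := lneq a b sj1 sj2
  have N1 := lneq a1 b1 sk1 sk2
  have m1 : Mt n1 s1 ↔ s1 j = b := by
    constructor
    · intro e
      rcases cj with e1 | e1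
      · exact e1
      · exact absurd (by rw [n1j, e1, add22]) (e j)
    · intro e t
      by_cases tj : t = j
      · subst tj; rw [n1j, e]; exact ne_add2 _
      by_cases tk : t = k
      · subst tk; rw [n1k, ← ha1]; exact my t
      · rw [(hoff t tj tk).2.1]; exact my t
  have m2 : Mt n2 s1 ↔ s1 k = b1 := by
    constructor
    · intro e
      rcases ck with e1 | e1
      · exact absurd (by rw [n2k, e1]) (e k)
      · exact e1
    · intro e t
      by_cases tj : t = j
      · subst tj; rw [n2j, ← xj]; exact mx t
      by_cases tk : t = k
      · subst tk; rw [n2k, e]; exact N1.2.2.2.2.2.1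
      · rw [(hoff t tj tk).2.2]; exact my t
  have hzF : z ∈ P'.filter (fun v => Mt v s1) := Finset.mem_filter.2 ⟨hz, mz⟩
  rcases cj with cj | cj <;> rcases ck with ck | ck
  · -- point in `n1` not in `P`
    obtain ⟨e, hye, hse⟩ := my.point
    obtain ⟨p1, p2, p3, p4, F, -⟩ := quad sj1 sj2
    obtain ⟨q1, q2, q3, q4, F1, -⟩ := quad sk1 sk2
    have Ey : E2 j k e y := fun t _ _ => hye t
    have Es : E2 j k e s1 := fun t _ _ => hse t
    have En : E2 j k e n1 := (E2_congr fun t h1 h2 => (hoff t h1 h2).2.1).2 Ey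
    have h1 := h.onS hs1 (X2 j k e p3 q2) (by
      rw [mem2 jk, cj, ck]; simp [F, F1, Es])
    have h2 : Cov P' (X2 j k e p3 q2) := ⟨n1, hn1, by rw [mem2 jk, n1j, n1k]; simp [F, F1, En]⟩
    rw [← h1, cov2 hP, mem2 jk, mem2 jk, xj, xk, ha, ha1] at h2
    simp [F, F1] at h2
  · -- three words
    have : P'.filter (fun v => Mt v s1) = P' := by
      refine Finset.filter_true_of_mem fun v hv => ?_
      rw [hP'e] at hv
      simp only [Finset.mem_insert, Finset.mem_singleton] at hv
      rcases hv with rfl | rfl | rfl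
      · exact m1.2 cj
      · exact m2.2 ck
      · exact mz
    rw [this] at hcs
    omega
  · -- one word
    have : P'.filter (fun v => Mt v s1) ⊆ {z} := by
      intro v hv
      obtain ⟨hv, hv2⟩ := Finset.mem_filter.1 hv
      rw [hP'e] at hv
      simp only [Finset.mem_insert, Finset.mem_singleton] at hv ⊢
      rcases hv with rfl | rfl | rfl
      · have := m1.1 hv2
        grind
      · have := m2.1 hv2
        grind
      · rfl
    have := Finset.card_le_card this
    rw [Finset.card_singleton] at this
    omega
  · -- `z` is a twin of `n1`
    have hzy : z = Function.update y j (b + 2) := by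
      refine trace_eq mz (my.upd (by rw [cj]; exact ne_add2 _)) fun p hp => ?_
      have hc := h.onS hs1 p hp
      have hzn2 : ¬ (Mem z p ∧ Mem n2 p) := fun hh => hz2 (h.cP'.uniq hn2 hz hh.2 hh.1)
      rw [cov2 hP, cov3 hP'e] at hc
      rw [mem_upd_iff]
      have hyy : (∀ t, t ≠ j → L (y t) (p t)) ↔ L a1 (p k) ∧ E2 j k p y := by
        constructor
        · intro hh
          exact ⟨ha1 ▸ hh k jk.symm, fun t h1 _ => hh t h1⟩
        · rintro ⟨h1, h2⟩ t tj
          by_cases tk : t = k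
          · subst tk; rw [ha1]; exact h1
          · exact h2 t tj tk
      rw [hyy]
      rw [memsplit j k x, memsplit j k y, memsplit j k n1, memsplit j k n2, xj, xk, n1j, n1k, n2j, n2k, ha, ha1,
        E2_congr fun t h1 h2 => (hoff t h1 h2).1, E2_congr fun t h1 h2 => (hoff t h1 h2).2.1,
        E2_congr fun t h1 h2 => (hoff t h1 h2).2.2] at hc
      rw [memsplit j k n2, n2j, n2k, E2_congr fun t h1 h2 => (hoff t h1 h2).2.2] at hzn2
      have f1 := hp j
      have f2 := hp k
      rw [cj] at f1
      rw [ck] at f2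
      have f3 := L_either a _ _ N.2.2.2.2.2.2.1 N.2.2.2.2.2.2.2.1 f1
      have f4 := L_either a1 _ _ sk1 sk2 f2
      have f5 := L_compl a (p j)
      have f6 := L_compl a1 (p k)
      have f7 := L_compl b (p j)
      by_cases g1 : L a (p j) <;> by_cases g2 : L a1 (p k) <;> by_cases g3 : E2 j k p y <;> grind
    have := twin_not h.cP' hn1 hz j (fun t ht => by
      rw [hzy, Function.update_of_ne ht]
      by_cases tk : t = k
      · subst tk; rw [n1k, ha1]
      · exact (hoff t ht tk).2.1)
    exact hz1 this

theorem caseII (h : Cfg P R P' R' Q S Q' S') (hP : P.card = 2) (hP' : P'.card = 3) (hQ : Q.card ≤ 2)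
    (hQ' : Q'.card ≤ 4) (x0 : Fin d → ZMod 4) (hx0 : Cov P x0) (hx1 : ¬ Cov Q x0) : False := by
  obtain ⟨x, y, hxy, hPe⟩ := Finset.card_eq_two.1 hP
  have hPe' : P = {y, x} := by rw [hPe, Finset.pair_comm]
  have hx : x ∈ P := by rw [hPe]; simp
  have hy : y ∈ P := by rw [hPe]; simp
  have key : ∀ s ∈ S, ∀ x0, Mem s x0 → Cov P x0 → (∀ v ∈ P, Mt v s) ∧
      (P'.filter (fun v => Mt v s)).card = 2 ∧
      (OL s x y (P'.filter (fun v => Mt v s)) ∨ OL s y x (P'.filter (fun v => Mt v s))) := by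
    intro s hs x0 hx0 hx1
    obtain ⟨hm, h1 | ⟨h1, h2⟩⟩ := h.useSL hPe hxy (by omega) hs hx0 hx1
    · exact ⟨hm, h1⟩
    · exfalso
      have hF : P'.filter (fun v => Mt v s) = P' :=
        Finset.eq_of_subset_of_card_le (Finset.filter_subset _ _) (by omega)
      rw [hF] at h2
      have mz : ∀ v ∈ P', Mt v s := by
        intro v hv
        rw [← hF] at hv
        exact (Finset.mem_filter.1 hv).2
      rcases h2 with h2 | h2 | h2
      · obtain ⟨j, k, l, z, n1, n2, hN, jk, jl, kl, a1, a2, a3, a4, a5, a6, b1, b2, b3, b4, b5, b6, b7, b8, b9,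
          c1, c2, c3, hoff⟩ := h2
        exact h.caseO2 hQ hs hPe hN (mz z (by rw [hN]; simp)) jk jl kl _ _ _ _ _ _ a1 a2 a3 a4 a5 a6
          rfl rfl rfl rfl b1 b2 b3 b4 b5 b6 rfl rfl b7 b8 b9 c1 c2 c3 hoff
      · obtain ⟨j, k, l, z, n1, n2, hN, jk, jl, kl, a1, a2, a3, a4, a5, a6, b1, b2, b3, b4, b5, b6, b7, b8, b9,
          c1, c2, c3, hoff⟩ := h2
        exact h.caseO3 hQ hs hPe hN (hm y hy) jk jl kl _ _ _ _ _ _ a1 a2 a3 a4 a5 a6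
          rfl rfl rfl b1 b2 b3 rfl rfl rfl b4 b5 b6 b7 b8 b9 c1 c2 c3 hoff
      · obtain ⟨j, k, l, z, n1, n2, hN, jk, jl, kl, a1, a2, a3, a4, a5, a6, b1, b2, b3, b4, b5, b6, b7, b8, b9,
          c1, c2, c3, hoff⟩ := h2
        exact h.caseO3 hQ hs hPe' hN (hm x hx) jk jl kl _ _ _ _ _ _ a1 a2 a3 a4 a5 a6
          rfl rfl rfl b1 b2 b3 rfl rfl rfl b4 b5 b6 b7 b8 b9 c1 c2 c3 hoff
  have hS : Cov S x0 := by
    have := h.pt x0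
    grind
  obtain ⟨s, hs, hsx⟩ := hS
  obtain ⟨hm, -, hL | hL⟩ := key s hs x0 hsx hx0
  · exact h.caseIIL hP' hQ' hPe (hm y hy) hL fun s hs x0 h1 h2 =>
      ⟨(key s hs x0 h1 h2).1, (key s hs x0 h1 h2).2.1⟩
  · exact h.caseIIL hP' hQ' hPe' (hm x hx) hL fun s hs x0 h1 h2 =>
      ⟨(key s hs x0 h1 h2).1, (key s hs x0 h1 h2).2.1⟩

end Cfg
end KC


namespace KC
variable {d : ℕ}

theorem mem_ext_lett : ∀ a b : ZMod 4, L a b → L b a → a = b := by decide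

theorem mem_ext {u v : Fin d → ZMod 4} (h : ∀ x, Mem u x ↔ Mem v x) : u = v := by
  funext t
  exact mem_ext_lett _ _ ((h v).2 (mem_self v) t) ((h u).1 (mem_self u) t)

theorem Cfg.refl2 {P R P' R' Q S Q' S' : Finset (Fin d → ZMod 4)}
    (h : Cfg P R P' R' Q S Q' S') : Cfg P R' P' R Q S' Q' S := h.rot.rot.refl

structure CI (P R P' R' Q S Q' S' : Finset (Fin d → ZMod 4)) (j k : Fin d) (a b a1 b1 : ZMod 4)
    (x y n1 n2 : Fin d → ZMod 4) : Prop where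
  cfg : Cfg P R P' R' Q S Q' S'
  jk : j ≠ k
  hb : b ≠ a
  hb' : b ≠ a + 2
  hb1 : b1 ≠ a1
  hb1' : b1 ≠ a1 + 2
  hP : P = {x, y}
  hP' : P' = {n1, n2}
  xj : x j = a + 2
  xk : x k = b1
  yj : y j = a
  yk : y k = a1
  n1j : n1 j = b
  n1k : n1 k = a1
  n2j : n2 j = a + 2
  n2k : n2 k = a1 + 2
  off : ∀ t, t ≠ j → t ≠ k → x t = y t ∧ n1 t = y t ∧ n2 t = y t
  hS : ∀ s ∈ S, ∀ p, Mem s p → Cov P p → s j = b ∧ s k = b1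
  hS' : ∀ s ∈ S', ∀ p, Mem s p → Cov P p → s j = b ∧ s k = b1
  cQ : Q.card ≤ 3
  cQ' : Q'.card ≤ 3

namespace CI
variable {P R P' R' Q S Q' S' : Finset (Fin d → ZMod 4)} {j k : Fin d} {a b a1 b1 : ZMod 4}
    {x y n1 n2 : Fin d → ZMod 4}

theorem sym (h : CI P R P' R' Q S Q' S' j k a b a1 b1 x y n1 n2) :
    CI P' R P R' Q' S Q S' k j (a1 + 2) b1 (a + 2) b n1 n2 x y where
  cfg := h.cfg.refl
  jk := h.jk.symm
  hb := h.hb1'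
  hb' := by rw [add22]; exact h.hb1
  hb1 := h.hb'
  hb1' := by rw [add22]; exact h.hb
  hP := h.hP'
  hP' := h.hP
  xj := by rw [add22]; exact h.n1k
  xk := h.n1j
  yj := h.n2k
  yk := h.n2j
  n1j := h.xk
  n1k := h.xj
  n2j := by rw [add22]; exact h.yk
  n2k := by rw [add22]; exact h.yj
  off := fun t tk tj => by
    obtain ⟨e1, e2, e3⟩ := h.off t tj tk
    rw [e1, e2, e3]; simp
  hS := fun s hs p hp hc => (h.hS s hs p hp ((h.cfg.onS hs p hp).2 hc)).symm
  hS' := fun s hs p hp hc => (h.hS' s hs p hp ((h.cfg.refl2.onS hs p hp).2 hc)).symm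
  cQ := h.cQ'
  cQ' := h.cQ

theorem sym2 (h : CI P R P' R' Q S Q' S' j k a b a1 b1 x y n1 n2) :
    CI P R' P' R Q S' Q' S j k a b a1 b1 x y n1 n2 :=
  { h with cfg := h.cfg.refl2, hS := h.hS', hS' := h.hS }

theorem Ex (h : CI P R P' R' Q S Q' S' j k a b a1 b1 x y n1 n2) {e : Fin d → ZMod 4} :
    E2 j k e x ↔ E2 j k e y := E2_congr fun t h1 h2 => (h.off t h1 h2).1
theorem En1 (h : CI P R P' R' Q S Q' S' j k a b a1 b1 x y n1 n2) {e : Fin d → ZMod 4} :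
    E2 j k e n1 ↔ E2 j k e y := E2_congr fun t h1 h2 => (h.off t h1 h2).2.1
theorem En2 (h : CI P R P' R' Q S Q' S' j k a b a1 b1 x y n1 n2) {e : Fin d → ZMod 4} :
    E2 j k e n2 ↔ E2 j k e y := E2_congr fun t h1 h2 => (h.off t h1 h2).2.2

theorem covP (h : CI P R P' R' Q S Q' S' j k a b a1 b1 x y n1 n2) (e : Fin d → ZMod 4) (p q : ZMod 4) :
    Cov P (X2 j k e p q) ↔ ((L (a + 2) p ∧ L b1 q) ∨ (L a p ∧ L a1 q)) ∧ E2 j k e y := by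
  rw [cov2 h.hP, mem2 h.jk, mem2 h.jk, h.xj, h.xk, h.yj, h.yk, h.Ex]
  grind

theorem covP' (h : CI P R P' R' Q S Q' S' j k a b a1 b1 x y n1 n2) (e : Fin d → ZMod 4) (p q : ZMod 4) :
    Cov P' (X2 j k e p q) ↔ ((L b p ∧ L a1 q) ∨ (L (a + 2) p ∧ L (a1 + 2) q)) ∧ E2 j k e y := by
  rw [cov2 h.hP', mem2 h.jk, mem2 h.jk, h.n1j, h.n1k, h.n2j, h.n2k, h.En1, h.En2]
  grind

theorem qA (h : CI P R P' R' Q S Q' S' j k a b a1 b1 x y n1 n2) {e s : Fin d → ZMod 4}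
    (Ey : E2 j k e y) (hs : s ∈ S) (sj : s j = b) (sk : s k = b1) (Es : E2 j k e s) :
    (∃ q ∈ Q, q j = b + 2 ∧ q k = b1 ∧ E2 j k e q) ∧
    (∃ q ∈ Q, q j = a ∧ q k = b1 + 2 ∧ E2 j k e q) := by
  obtain ⟨p1, p2, p3, p4, F, r1, r2, r3, r4⟩ := quad h.hb h.hb'
  obtain ⟨q1, q2, q3, q4, F1, u1, u2, u3, u4⟩ := quad h.hb1 h.hb1'
  have N := lneq a b h.hb h.hb'
  have N1 := lneq a1 b1 h.hb1 h.hb1'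
  have hxP : x ∈ P := by rw [h.hP]; simp
  have hn2 : n2 ∈ P' := by rw [h.hP']; simp
  have hK : ¬ Cov Q (X2 j k e p4 q2) := by
    intro hq
    obtain ⟨r, hr, hrx⟩ := h.cfg.r_of_q (by
      rw [h.covP]
      simp [F, F1]) hq
    rw [mem2 h.jk] at hrx
    obtain ⟨e1, e2, e4⟩ := hrx
    have d1 := dj2 (h.cfg.PR x hxP r hr) (h.Ex.2 Ey) e4
    have d2 := dj2 (h.cfg.RP' r hr n2 hn2).symm (h.En2.2 Ey) e4
    have f1 := r4 _ e1
    have f2 := u2 _ e2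
    rw [h.xj, h.xk, add22] at d1
    rw [h.n2j, h.n2k, add22, add22] at d2
    grind
  have DS : ∀ q ∈ Q, E2 j k e q → q j = b + 2 ∨ q k = b1 + 2 := by
    intro q hq hE
    have := dj2 (h.cfg.QS q hq s hs).symm Es hE
    rwa [sj, sk] at this
  have K : ∀ q ∈ Q, E2 j k e q → ¬ (L (q j) p4 ∧ L (q k) q2) := by
    rintro q hq hE ⟨e1, e2⟩
    exact hK ⟨q, hq, by rw [mem2 h.jk]; exact ⟨e1, e2, hE⟩⟩
  constructor
  · obtain ⟨q, hq, hqx⟩ := h.cfg.q_of_diff (x := X2 j k e p2 q1) (by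
      rw [h.covP]; simp [F, F1, Ey]) (by rw [h.covP']; simp [F])
    rw [mem2 h.jk] at hqx
    obtain ⟨e1, e2, e4⟩ := hqx
    have f1 := r2 _ e1
    have f2 := u1 _ e2
    have f3 := DS q hq e4
    have f4 : q j = b + 2 := by grind
    refine ⟨q, hq, f4, ?_, e4⟩
    rcases f2 with g | g
    · exact absurd ⟨by rw [f4]; simp [F], by rw [g]; simp [F1]⟩ (K q hq e4)
    · exact g
  · obtain ⟨q, hq, hqx⟩ := h.cfg.q_of_diff (x := X2 j k e p2 q2) (by
      rw [h.covP]; simp [F, F1, Ey]) (by rw [h.covP']; simp [F])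
    rw [mem2 h.jk] at hqx
    obtain ⟨e1, e2, e4⟩ := hqx
    have f1 := r2 _ e1
    have f2 := u2 _ e2
    have f3 := DS q hq e4
    have f4 : q j = a := by
      rcases f1 with g | g
      · exact g
      · exact absurd ⟨by rw [g]; simp [F], e2⟩ (K q hq e4)
    refine ⟨q, hq, f4, by grind, e4⟩

/-- the positive zone is nonempty over `e` -/
def Z (P Q : Finset (Fin d → ZMod 4)) (j k : Fin d) (e : Fin d → ZMod 4) : Prop :=
  ∃ p, Cov P p ∧ ¬ Cov Q p ∧ ∀ t, t ≠ j → t ≠ k → p t = e t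

theorem Z.getE (h : CI P R P' R' Q S Q' S' j k a b a1 b1 x y n1 n2) {e : Fin d → ZMod 4}
    (hz : Z P Q j k e) : E2 j k e y ∧ (∃ s ∈ S, s j = b ∧ s k = b1 ∧ E2 j k e s) := by
  obtain ⟨p, hp, hq, hpe⟩ := hz
  have hE : ∀ v, Mem v p → E2 j k e v := fun v hv t h1 h2 => hpe t h1 h2 ▸ hv t
  constructor
  · rw [cov2 h.hP] at hp
    rcases hp with hp | hp
    · exact h.Ex.1 (hE _ hp)
    · exact hE _ hp
  · have hS : Cov S p := by
      have := h.cfg.pt p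
      grind
    obtain ⟨s, hs, hsp⟩ := hS
    obtain ⟨h1, h2⟩ := h.hS s hs p hsp hp
    exact ⟨s, hs, h1, h2, hE s hsp⟩

theorem X2_off {j k : Fin d} (e : Fin d → ZMod 4) (p q : ZMod 4) (t : Fin d) (h1 : t ≠ j) (h2 : t ≠ k) :
    X2 j k e p q t = e t := by simp [X2, h1, h2]

theorem third (h : CI P R P' R' Q S Q' S' j k a b a1 b1 x y n1 n2) {e0 e1 : Fin d → ZMod 4}
    (h0 : Z P Q j k e0) (Ey : E2 j k e1 y) (h1 : ¬ Z P Q j k e1) :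
    ∃ q1 q2 q3, Q = {q1, q2, q3} ∧ q1 j = b + 2 ∧ q2 k = b1 + 2 ∧ q3 j = b ∧ q3 k = b1 := by
  obtain ⟨Ey0, s, hs, sj, sk, Es⟩ := Z.getE h h0
  obtain ⟨⟨v1, hv1, v1j, v1k, -⟩, ⟨v2, hv2, v2j, v2k, -⟩⟩ := h.qA Ey0 hs sj sk Es
  obtain ⟨p1, p2, p3, p4, F, r1, r2, r3, r4⟩ := quad h.hb h.hb'
  obtain ⟨q1, q2, q3, q4, F1, u1, u2, u3, u4⟩ := quad h.hb1 h.hb1'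
  have N := lneq a b h.hb h.hb'
  have N1 := lneq a1 b1 h.hb1 h.hb1'
  have hPQ : ∀ p q, Cov P (X2 j k e1 p q) → Cov Q (X2 j k e1 p q) := by
    intro p q hp
    by_contra hq
    exact h1 ⟨_, hp, hq, fun t h1 h2 => X2_off e1 p q t h1 h2⟩
  obtain ⟨w1, hw1, hx1⟩ := hPQ p3 q1 (by rw [h.covP]; simp [F, F1, Ey])
  obtain ⟨w2, hw2, hx2⟩ := hPQ p3 q3 (by rw [h.covP]; simp [F, F1, Ey])
  obtain ⟨w3, hw3, hx3⟩ := hPQ p1 q1 (by rw [h.covP]; simp [F, F1, Ey])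
  rw [mem2 h.jk] at hx1 hx2 hx3
  have v12 : v1 ≠ v2 := by
    rintro rfl
    rw [v1k] at v2k
    exact ne_add2 _ v2k
  have n11 : w1 ≠ v1 := by
    rintro rfl
    rw [v1j] at hx1
    simp [F] at hx1
  have n12 : w1 ≠ v2 := by
    rintro rfl
    rw [v2k] at hx1
    simp [F1] at hx1
  have n21 : w2 ≠ v1 := by
    rintro rfl
    rw [v1j] at hx2
    simp [F] at hx2
  have n22 : w2 ≠ v2 := by
    rintro rfl
    rw [v2k] at hx2
    simp [F1] at hx2
  have n31 : w3 ≠ v1 := by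
    rintro rfl
    rw [v1j] at hx3
    simp [F] at hx3
  have n32 : w3 ≠ v2 := by
    rintro rfl
    rw [v2k] at hx3
    simp [F1] at hx3
  have hQe : Q = {v1, v2, w1} := by
    symm
    refine Finset.eq_of_subset_of_card_le ?_ ?_
    · intro v hv
      simp only [Finset.mem_insert, Finset.mem_singleton] at hv
      rcases hv with rfl | rfl | rfl <;> assumption
    · rw [Finset.card_eq_three.2 ⟨v1, v2, w1, v12, n11.symm, n12.symm, rfl⟩]
      exact h.cQ
  have e2 : w2 = w1 := by
    rw [hQe] at hw2
    simp only [Finset.mem_insert, Finset.mem_singleton] at hw2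
    grind
  have e3 : w3 = w1 := by
    rw [hQe] at hw3
    simp only [Finset.mem_insert, Finset.mem_singleton] at hw3
    grind
  subst e2 e3
  refine ⟨v1, v2, _, hQe, v1j, v2k, ?_, ?_⟩
  · have f1 := r3 _ hx1.1
    have f2 := r1 _ hx3.1
    grind
  · have f1 := u3 _ hx2.2.1
    have f2 := u1 _ hx3.2.1
    grind

theorem Zsym (h : CI P R P' R' Q S Q' S' j k a b a1 b1 x y n1 n2) (e : Fin d → ZMod 4) :
    Z P' Q' k j e ↔ Z P Q j k e := by
  constructor
  · rintro ⟨p, h1, h2, h3⟩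
    have := h.cfg.pt p
    exact ⟨p, by grind, by grind, fun t a b => h3 t b a⟩
  · rintro ⟨p, h1, h2, h3⟩
    have := h.cfg.pt p
    exact ⟨p, by grind, by grind, fun t a b => h3 t b a⟩

theorem E2_swap {j k : Fin d} {e v : Fin d → ZMod 4} : E2 j k e v ↔ E2 k j e v :=
  ⟨fun h t a b => h t b a, fun h t a b => h t b a⟩

/-- the positive zone lives over every point -/
theorem Zall (h : CI P R P' R' Q S Q' S' j k a b a1 b1 x y n1 n2) {e0 e1 : Fin d → ZMod 4}
    (h0 : Z P Q j k e0) (Ey : E2 j k e1 y) : Z P Q j k e1 := by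
  by_contra h1
  obtain ⟨v1, v2, v3, hQ, v1j, v2k, v3j, v3k⟩ := h.third h0 Ey h1
  obtain ⟨w1, w2, w3, hQ', w1k, w2j, w3k, w3j⟩ := h.sym.third ((h.Zsym e0).2 h0)
    (E2_swap.1 (h.En2.2 Ey)) (fun hh => h1 ((h.Zsym e1).1 hh))
  obtain ⟨p1, p2, p3, p4, F, -⟩ := quad h.hb h.hb'
  obtain ⟨q1, q2, q3, q4, F1, -⟩ := quad h.hb1 h.hb1'
  have hE : ∀ e, E2 j k e v3 ↔ E2 j k e w3 := by
    intro e
    have c1 : Cov Q (X2 j k e p1 q1) ↔ E2 j k e v3 := by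
      rw [cov3 hQ, mem2 h.jk, mem2 h.jk, mem2 h.jk, v1j, v2k, v3j, v3k]
      simp [F, F1]
    have c2 : Cov Q' (X2 j k e p1 q1) ↔ E2 j k e w3 := by
      rw [cov3 hQ', mem2 h.jk, mem2 h.jk, mem2 h.jk, w1k, w2j, w3j, w3k]
      simp [F, F1]
    have c3 : Cov P (X2 j k e p1 q1) ↔ E2 j k e y := by
      rw [h.covP]; simp [F, F1]
    have c4 : Cov P' (X2 j k e p1 q1) ↔ E2 j k e y := by
      rw [h.covP']; simp [F, F1]
    have := h.cfg.pt (X2 j k e p1 q1)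
    grind
  have : v3 = w3 := mem_ext fun p => by
    rw [memsplit j k, memsplit j k w3, hE, v3j, v3k, w3j, w3k]
  subst this
  exact h.cfg.tQ v3 (by rw [hQ]; simp) (by rw [hQ']; simp)

theorem getR (h : CI P R P' R' Q S Q' S' j k a b a1 b1 x y n1 n2) {e : Fin d → ZMod 4}
    (hz : Z P Q j k e) : ∃ r ∈ R, r j = a ∧ r k = a1 + 2 ∧ E2 j k e r := by
  obtain ⟨Ey, s, hs, sj, sk, Es⟩ := Z.getE h hz
  obtain ⟨-, ⟨v2, hv2, v2j, v2k, Ev⟩⟩ := h.qA Ey hs sj sk Es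
  obtain ⟨p1, p2, p3, p4, F, r1, r2, r3, r4⟩ := quad h.hb h.hb'
  obtain ⟨q1, q2, q3, q4, F1, u1, u2, u3, u4⟩ := quad h.hb1 h.hb1'
  have N := lneq a b h.hb h.hb'
  have N1 := lneq a1 b1 h.hb1 h.hb1'
  obtain ⟨r, hr, hrx⟩ := h.cfg.r_of_q (x := X2 j k e p1 q4) (by rw [h.covP]; simp [F, F1])
    ⟨v2, hv2, by rw [mem2 h.jk, v2j, v2k]; simp [F, F1, Ev]⟩
  rw [mem2 h.jk] at hrx
  obtain ⟨e1, e2, e4⟩ := hrx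
  have hxP : x ∈ P := by rw [h.hP]; simp
  have hyP : y ∈ P := by rw [h.hP]; simp
  have d1 := dj2 (h.cfg.PR x hxP r hr) (h.Ex.2 Ey) e4
  have d2 := dj2 (h.cfg.PR y hyP r hr) Ey e4
  have f1 := r1 _ e1
  have f2 := u4 _ e2
  rw [h.xj, h.xk, add22] at d1
  rw [h.yj, h.yk] at d2
  exact ⟨r, hr, by grind, by grind, e4⟩

end CI

/-- a family containing, over every point of `y`, a word with prescribed letters -/
theorem over5 {S : Finset (Fin d → ZMod 4)} (hS : Code S) {j k : Fin d} (jk : j ≠ k) (b b1 : ZMod 4)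
    (y : Fin d → ZMod 4) (h : ∀ e, E2 j k e y → ∃ s ∈ S, s j = b ∧ s k = b1 ∧ E2 j k e s) :
    X2 j k y b b1 ∈ S ∨ 5 ≤ (S.filter (fun s => s j = b ∧ s k = b1)).card := by
  by_cases hu : X2 j k y b b1 ∈ S.filter (fun s => s j = b ∧ s k = b1)
  · exact Or.inl (Finset.mem_filter.1 hu).1
  · right
    refine cover5' (hS.mono (Finset.filter_subset _ _)) hu fun p hp => ?_
    rw [memsplit j k] at hp
    obtain ⟨h1, h2, h3⟩ := hp
    have hy : E2 j k p y := (E2_congr fun t h1 h2 => CI.X2_off y b b1 t h1 h2).1 h3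
    obtain ⟨s, hs, sj, sk, Es⟩ := h p hy
    refine ⟨s, Finset.mem_filter.2 ⟨hs, sj, sk⟩, ?_⟩
    rw [memsplit j k, sj, sk]
    refine ⟨by simpa [X2] using h1, by simpa [X2, jk.symm] using h2, Es⟩

end KC


namespace KC
variable {d : ℕ}

def eps (b t : ZMod 4) : ℤ := if t = b then 1 else if t = b + 2 then -1 else 0

theorem eps_fac : ∀ b t : ZMod 4, (if L b t then (1 : ℤ) else -1) + (if L b (t + 1) then (1 : ℤ) else -1)
    = 2 * eps b t := by decide

theorem eps_bd : ∀ b t b1 t1 : ZMod 4, -1 ≤ eps b t * eps b1 t1 ∧ eps b t * eps b1 t1 ≤ 1 := by decide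

theorem eps_self : ∀ b : ZMod 4, eps b b = 1 := by decide

theorem eps_zero : ∀ b a : ZMod 4, b ≠ a → b ≠ a + 2 → eps b a = 0 ∧ eps b (a + 2) = 0 := by decide

def wf (j k : Fin d) (b b1 : ZMod 4) (i : Fin d) (p : ZMod 4) : ℤ :=
  if i = j then (if L b p then 1 else -1) else if i = k then (if L b1 p then 1 else -1) else 1

theorem wf_fac (j k : Fin d) (b b1 : ZMod 4) (i : Fin d) (v : Fin d → ZMod 4) :
    wf j k b b1 i (v i) + wf j k b b1 i (v i + 1) =
      2 * (if i = j then eps b (v j) else if i = k then eps b1 (v k) else 1) := by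
  unfold wf
  by_cases h1 : i = j
  · subst h1; simp only [if_true]; exact eps_fac _ _
  · by_cases h2 : i = k
    · subst h2; simp only [h1, if_true, if_false]; exact eps_fac _ _
    · simp [h1, h2]

theorem wf_prod {j k : Fin d} (jk : j ≠ k) (b b1 : ZMod 4) (v : Fin d → ZMod 4) :
    ∏ i, (wf j k b b1 i (v i) + wf j k b b1 i (v i + 1)) = 2 ^ d * (eps b (v j) * eps b1 (v k)) := by
  simp_rw [wf_fac]
  rw [Finset.prod_mul_distrib]
  congr 1
  · simp
  · rw [Finset.prod_eq_mul j k jk (fun c _ hc => by simp [hc.1, hc.2]) (by simp) (by simp)]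
    simp [jk.symm]

theorem wf_wt {j k : Fin d} (jk : j ≠ k) (b b1 : ZMod 4) (A : Finset (Fin d → ZMod 4)) :
    wt (wf j k b b1) A = 2 ^ d * ∑ v ∈ A, eps b (v j) * eps b1 (v k) := by
  unfold wt
  rw [Finset.mul_sum]
  exact Finset.sum_congr rfl fun v _ => wf_prod jk b b1 v

theorem sum_lb (A : Finset (Fin d → ZMod 4)) (f : (Fin d → ZMod 4) → ℤ) (p : (Fin d → ZMod 4) → Prop)
    [DecidablePred p] (c : ℤ) (h1 : ∀ v ∈ A, p v → c ≤ f v) (h2 : ∀ v, -1 ≤ f v) :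
    c * (A.filter p).card - (A.card - (A.filter p).card) ≤ ∑ v ∈ A, f v := by
  rw [← Finset.sum_filter_add_sum_filter_not A p]
  have e := Finset.card_filter_add_card_filter_not (s := A) p
  have a1 := Finset.card_nsmul_le_sum (A.filter p) f c (fun v hv =>
    h1 v (Finset.mem_filter.1 hv).1 (Finset.mem_filter.1 hv).2)
  have a2 := Finset.card_nsmul_le_sum (A.filter (fun v => ¬ p v)) f (-1) (fun v _ => h2 v)
  simp only [nsmul_eq_mul] at a1 a2
  have : ((A.filter p).card : ℤ) + (A.filter (fun v => ¬ p v)).card = A.card := by exact_mod_cast e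
  linarith [mul_comm c ((A.filter p).card : ℤ)]

namespace CI
variable {P R P' R' Q S Q' S' : Finset (Fin d → ZMod 4)} {j k : Fin d} {a b a1 b1 : ZMod 4}
    {x y n1 n2 : Fin d → ZMod 4}

theorem fin1 (h : CI P R P' R' Q S Q' S' j k a b a1 b1 x y n1 n2) {e0 : Fin d → ZMod 4}
    (h0 : Z P Q j k e0) (hc : R.card + S'.card ≤ 7)
    (h5 : 5 ≤ (S'.filter (fun s => s j = b ∧ s k = b1)).card) : False := by
  have hall : ∀ e, E2 j k e y → Z P Q j k e := fun e he => h.Zall h0 he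
  obtain ⟨Ey, s, hs, sj, sk, Es⟩ := Z.getE h h0
  obtain ⟨r, hr, -⟩ := h.getR h0
  obtain ⟨-, ⟨v2, hv2, v2j, -⟩⟩ := h.qA Ey hs sj sk Es
  have hS1 : 1 ≤ S.card := Finset.card_pos.2 ⟨s, hs⟩
  have hR1 : 1 ≤ R.card := Finset.card_pos.2 ⟨r, hr⟩
  have hS'5 := Finset.card_filter_le S' (fun s => s j = b ∧ s k = b1)
  have hc2 := h.cfg.card2
  have o1 := over5 h.cfg.cR h.jk a (a1 + 2) y fun e he => h.getR (hall e he)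
  have o2 := over5 h.cfg.cR' h.jk a (a1 + 2) y fun e he => h.sym2.getR (hall e he)
  have hw : X2 j k y a (a1 + 2) ∈ R := by
    rcases o1 with o | o
    · exact o
    · have := Finset.card_filter_le R (fun s => s j = a ∧ s k = a1 + 2)
      omega
  have hR' : 5 ≤ (R'.filter (fun s => s j = a ∧ s k = a1 + 2)).card := by
    rcases o2 with o | o
    · exact absurd o (h.cfg.tR _ hw)
    · exact o
  have W := h.cfg.wtSR (wf j k b b1)
  rw [wf_wt h.jk, wf_wt h.jk, wf_wt h.jk, wf_wt h.jk, ← mul_add, ← mul_add] at W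
  have W := mul_left_cancel₀ (by positivity) W
  have ez := eps_zero b a h.hb h.hb'
  have wP : ∑ v ∈ P, eps b (v j) * eps b1 (v k) = 0 := by
    refine Finset.sum_eq_zero fun v hv => ?_
    rw [h.hP] at hv
    simp only [Finset.mem_insert, Finset.mem_singleton] at hv
    rcases hv with rfl | rfl
    · rw [h.xj, ez.2, zero_mul]
    · rw [h.yj, ez.1, zero_mul]
  have wS := sum_lb S' (fun v => eps b (v j) * eps b1 (v k)) (fun s => s j = b ∧ s k = b1) 1
    (fun v _ hv => by simp only [hv.1, hv.2, eps_self]; norm_num) (fun v => (eps_bd _ _ _ _).1)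
  have wR := sum_lb R' (fun v => -(eps b (v j) * eps b1 (v k))) (fun s => s j = a ∧ s k = a1 + 2) 0
    (fun v _ hv => by simp only [hv.1, ez.1]; norm_num)
    (fun v => by have := (eps_bd b (v j) b1 (v k)).2; linarith)
  have wQ := sum_lb Q (fun v => eps b (v j) * eps b1 (v k)) (fun s => s j = a) 0
    (fun v _ hv => by simp only [hv, ez.1]; norm_num) (fun v => (eps_bd _ _ _ _).1)
  have hQ1 : 1 ≤ (Q.filter (fun s => s j = a)).card :=
    Finset.card_pos.2 ⟨v2, Finset.mem_filter.2 ⟨hv2, v2j⟩⟩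
  have hQ3 := h.cQ
  rw [Finset.sum_neg_distrib] at wR
  omega

theorem fin (h : CI P R P' R' Q S Q' S' j k a b a1 b1 x y n1 n2) {e0 : Fin d → ZMod 4}
    (h0 : Z P Q j k e0) (hc : R.card + S'.card ≤ 7) : False := by
  have hall : ∀ e, E2 j k e y → Z P Q j k e := fun e he => h.Zall h0 he
  have hc2 := h.cfg.card2
  rcases over5 h.cfg.cS h.jk b b1 y fun e he => (Z.getE h (hall e he)).2 with o | o
  · rcases over5 h.cfg.cS' h.jk b b1 y fun e he => (Z.getE h.sym2 (hall e he)).2 with o' | o'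
    · exact h.cfg.tS _ o o'
    · exact h.fin1 h0 hc o'
  · exact h.sym2.fin1 h0 (by omega) o

end CI

theorem lett_b : ∀ a b t : ZMod 4, b ≠ a → b ≠ a + 2 → a + 2 ≠ t + 2 → a ≠ t + 2 → b ≠ t + 2 → t = b := by
  decide

namespace Cfg
variable {P R P' R' Q S Q' S' : Finset (Fin d → ZMod 4)}

theorem caseIL (h : Cfg P R P' R' Q S Q' S') (hP2 : P.card = 2) (hP'2 : P'.card = 2) (hQ : Q.card ≤ 3)
    (hQ' : Q'.card ≤ 3) (hc : R.card + S'.card ≤ 7) (x0 : Fin d → ZMod 4) (hx0 : Cov P x0)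
    (hx1 : ¬ Cov Q x0) {s x y : Fin d → ZMod 4} (hP : P = {x, y}) (hL : OL s x y P') : False := by
  obtain ⟨j, k, n1, n2, hN, jk, sj1, sj2, sk1, sk2, xj, xk, n1j, n1k, n2j, n2k, hoff⟩ := hL
  have key : ∀ S : Finset (Fin d → ZMod 4), ∀ R R' S', Cfg P R P' R' Q S Q' S' → ∀ t ∈ S, ∀ p, Mem t p →
      Cov P p → t j = s j ∧ t k = s k := by
    intro S R R' S' h t ht p hp hc
    have m1 := h.all2 hP2 (by omega) ht hp hc
    have m2 := h.refl.all2 hP'2 (by omega) ht hp ((h.onS ht p hp).1 hc)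
    have mx := m1 x (by rw [hP]; simp)
    have my := m1 y (by rw [hP]; simp)
    have mn1 := m2 n1 (by rw [hN]; simp)
    have mn2 := m2 n2 (by rw [hN]; simp)
    constructor
    · exact lett_b (y j) _ _ sj1 sj2 (xj ▸ mx j) (my j) (n1j ▸ mn1 j)
    · exact lett_b (y k) _ _ sk1 sk2 (n2k ▸ mn2 k) (my k) (xk ▸ mx k)
  have C : CI P R P' R' Q S Q' S' j k (y j) (s j) (y k) (s k) x y n1 n2 :=
    { cfg := h, jk := jk, hb := sj1, hb' := sj2, hb1 := sk1, hb1' := sk2, hP := hP, hP' := hN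
      xj := xj, xk := xk, yj := rfl, yk := rfl, n1j := n1j, n1k := n1k, n2j := n2j, n2k := n2k
      off := hoff, hS := key S R R' S' h, hS' := key S' R' R S h.refl2, cQ := hQ, cQ' := hQ' }
  exact C.fin (e0 := x0) ⟨x0, hx0, hx1, fun _ _ _ => rfl⟩ hc

theorem caseI (h : Cfg P R P' R' Q S Q' S') (hP2 : P.card = 2) (hP'2 : P'.card = 2) (hQ : Q.card ≤ 3)
    (hQ' : Q'.card ≤ 3) (hc : R.card + S'.card ≤ 7) (x0 : Fin d → ZMod 4) (hx0 : Cov P x0)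
    (hx1 : ¬ Cov Q x0) : False := by
  obtain ⟨x, y, hxy, hPe⟩ := Finset.card_eq_two.1 hP2
  have hPe' : P = {y, x} := by rw [hPe, Finset.pair_comm]
  have hS : Cov S x0 := by
    have := h.pt x0
    grind
  obtain ⟨s, hs, hsx⟩ := hS
  obtain ⟨-, h1⟩ := h.useSL hPe hxy (by omega) hs hsx hx0
  have hle := Finset.card_filter_le P' (fun v => Mt v s)
  rcases h1 with ⟨h1, h2⟩ | ⟨h1, -⟩
  · have he := Finset.eq_of_subset_of_card_le (Finset.filter_subset (fun v => Mt v s) P') (by omega)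
    rw [he] at h2
    rcases h2 with h2 | h2
    · exact h.caseIL hP2 hP'2 hQ hQ' hc x0 hx0 hx1 hPe h2
    · exact h.caseIL hP2 hP'2 hQ hQ' hc x0 hx0 hx1 hPe' h2
  · omega

theorem main5 (h : Cfg P R P' R' Q S Q' S') (h5 : P.card + Q'.card ≤ 5)
    (ht : (P.card + Q'.card) + (R.card + S'.card) ≤ 11) (x : Fin d → ZMod 4)
    (hx : ¬ (Cov P x ↔ Cov Q x)) : False := by
  have k1 := h.card1
  have k2 := h.card2
  by_cases Zp : ∃ x, Cov P x ∧ ¬ Cov Q x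
  swap
  · push Not at Zp
    refine h.swap.step1 (by omega) Zp x ?_ ?_ <;> grind
  by_cases Zm : ∃ x, Cov Q x ∧ ¬ Cov P x
  swap
  · push Not at Zm
    refine h.step1 (by omega) Zm x ?_ ?_ <;> grind
  obtain ⟨p, hp, hpq⟩ := Zp
  obtain ⟨q, hq, hqp⟩ := Zm
  have ap := h.pt p
  have aq := h.pt q
  have p1 : Cov P' p := by grind
  have p2 : Cov S p := by grind
  have q1 : Cov Q' q := by grind
  have q2 : Cov R q := by grind
  have p3 : ¬ Cov Q' p := by grind
  obtain ⟨s, hs, hsp⟩ := p2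
  obtain ⟨r, hr, hrq⟩ := q2
  have pos : ∀ A : Finset (Fin d → ZMod 4), ∀ x, Cov A x → 1 ≤ A.card := by
    rintro A x ⟨v, hv, -⟩
    exact Finset.card_pos.2 ⟨v, hv⟩
  have n1 := pos _ _ hp
  have n2 := pos _ _ p1
  have n3 := pos _ _ hq
  have n4 := pos _ _ q1
  have m1 := (h.onS2 hs (by omega) p hsp hp).trans (Finset.card_filter_le _ _)
  have m2 := (h.refl.onS2 hs (by omega) p hsp p1).trans (Finset.card_filter_le _ _)
  have m3 := (h.swap.onS2 hr (by omega) q hrq hq).trans (Finset.card_filter_le _ _)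
  have m4 := (h.swap.refl.onS2 hr (by omega) q hrq q1).trans (Finset.card_filter_le _ _)
  by_cases a1 : P.card = 2
  · by_cases a2 : P'.card = 2
    · exact h.caseI a1 a2 (by omega) (by omega) (by omega) p hp hpq
    · exact h.caseII a1 (by omega) (by omega) (by omega) p hp hpq
  · by_cases a2 : P'.card = 2
    · exact h.refl.caseII a2 (by omega) (by omega) (by omega) p p1 p3
    · exact h.swap.caseI (by omega) (by omega) (by omega) (by omega) (by omega) q hq hqp

theorem main (h : Cfg P R P' R' Q S Q' S')
    (ht : (P.card + Q'.card) + (R.card + S'.card) ≤ 11) (x : Fin d → ZMod 4) : Cov P x ↔ Cov Q x := by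
  by_contra hx
  have k1 := h.card1
  have k2 := h.card2
  by_cases h5 : P.card + Q'.card ≤ 5
  · exact h.main5 h5 ht x hx
  · refine h.rot.main5 (by omega) (by omega) x ?_
    have := h.pt x
    grind

end Cfg
end KC


namespace KC
variable {d : ℕ}

/-- words of `V` with letter `l` at `i`, with this letter erased -/
def sec (V : Finset (Fin d → ZMod 4)) (i : Fin d) (l : ZMod 4) : Finset (Fin d → ZMod 4) :=
  (V.filter (fun v => v i = l)).image (fun v => Function.update v i 0)

theorem mem_sec {V : Finset (Fin d → ZMod 4)} {i : Fin d} {l : ZMod 4} {u : Fin d → ZMod 4} :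
    u ∈ sec V i l ↔ ∃ v ∈ V, v i = l ∧ Function.update v i 0 = u := by
  simp [sec, and_assoc]

theorem upd_inj {u v : Fin d → ZMod 4} {i : Fin d} (h : Function.update u i 0 = Function.update v i 0)
    (t : Fin d) (ht : t ≠ i) : u t = v t := by
  have := congrFun h t
  simpa [ht] using this

theorem upd_inj2 {u v : Fin d → ZMod 4} {i : Fin d} (h : Function.update u i 0 = Function.update v i 0)
    (hi : u i = v i) : u = v := by
  funext t
  by_cases ht : t = i
  · rw [ht, hi]
  · exact upd_inj h t ht

theorem card_sec (V : Finset (Fin d → ZMod 4)) (i : Fin d) (l : ZMod 4) :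
    (sec V i l).card = (V.filter (fun v => v i = l)).card := by
  refine Finset.card_image_of_injOn fun u hu v hv h => upd_inj2 h ?_
  have h1 : u ∈ V ∧ u i = l := by simpa using hu
  have h2 : v ∈ V ∧ v i = l := by simpa using hv
  rw [h1.2, h2.2]

theorem card_total (V : Finset (Fin d → ZMod 4)) (i : Fin d) :
    V.card = (sec V i 0).card + (sec V i 1).card + (sec V i 2).card + (sec V i 3).card := by
  simp only [card_sec]
  rw [Finset.card_eq_sum_card_fiberwise (f := fun v => v i) (t := Finset.univ) (fun _ _ => by simp)]
  exact Fin.sum_univ_four _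

theorem cov_sec {V : Finset (Fin d → ZMod 4)} {i : Fin d} {l : ZMod 4} {x : Fin d → ZMod 4} :
    Cov (sec V i l) x ↔ L 0 (x i) ∧ ∃ v ∈ V, v i = l ∧ ∀ t, t ≠ i → L (v t) (x t) := by
  constructor
  · rintro ⟨u, hu0, hux⟩
    obtain ⟨v, hv, hl, rfl⟩ := mem_sec.1 hu0
    rw [mem_upd_iff] at hux
    exact ⟨hux.1, v, hv, hl, hux.2⟩
  · rintro ⟨h0, v, hv, hl, h⟩
    exact ⟨_, mem_sec.2 ⟨v, hv, hl, rfl⟩, mem_upd_iff.2 ⟨h0, h⟩⟩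

theorem cov_upd {V : Finset (Fin d → ZMod 4)} {i : Fin d} {p q : ZMod 4} {x : Fin d → ZMod 4}
    (hpq : ∀ l, L l q ↔ l = p ∨ l = q) :
    Cov V (Function.update x i q) ↔ (∃ v ∈ V, v i = p ∧ ∀ t, t ≠ i → L (v t) (x t)) ∨
      (∃ v ∈ V, v i = q ∧ ∀ t, t ≠ i → L (v t) (x t)) := by
  unfold Cov
  simp only [mem_upd_pt_iff, hpq]
  constructor
  · rintro ⟨v, hv, h1 | h1, h2⟩
    · exact Or.inl ⟨v, hv, h1, h2⟩
    · exact Or.inr ⟨v, hv, h1, h2⟩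
  · rintro (⟨v, hv, h1, h2⟩ | ⟨v, hv, h1, h2⟩)
    · exact ⟨v, hv, Or.inl h1, h2⟩
    · exact ⟨v, hv, Or.inr h1, h2⟩

theorem sec_code {V : Finset (Fin d → ZMod 4)} (hV : Code V) (i : Fin d) (l : ZMod 4) :
    Code (sec V i l) := by
  intro u hu0 v hv0 huv
  obtain ⟨u, hu, ul, rfl⟩ := mem_sec.1 hu0
  obtain ⟨v, hv, vl, rfl⟩ := mem_sec.1 hv0
  have hne : u ≠ v := fun h => huv (by rw [h])
  obtain ⟨⟨j, hj⟩, h2⟩ := hV u hu v hv hne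
  constructor
  · have ji : j ≠ i := by
      rintro rfl
      rw [ul, vl] at hj
      exact ne_add2 _ hj
    exact ⟨j, by simpa [ji] using hj⟩
  · intro t
    obtain ⟨k, hk, hk2⟩ := h2 t
    have ki : k ≠ i := by
      rintro rfl
      exact hk2 (by rw [ul, vl])
    exact ⟨k, hk, by simpa [ki] using hk2⟩

theorem sec_dj {V : Finset (Fin d → ZMod 4)} (hV : Code V) (i : Fin d) {l m : ZMod 4} (h1 : l ≠ m)
    (h2 : m ≠ l + 2) : ∀ u ∈ sec V i l, ∀ v ∈ sec V i m, Dj u v := by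
  intro u hu0 v hv0
  obtain ⟨u, hu, ul, rfl⟩ := mem_sec.1 hu0
  obtain ⟨v, hv, vl, rfl⟩ := mem_sec.1 hv0
  have hne : u ≠ v := fun h => h1 (by rw [← ul, ← vl, h])
  obtain ⟨⟨j, hj⟩, -⟩ := hV u hu v hv hne
  have ji : j ≠ i := by
    rintro rfl
    rw [ul, vl] at hj
    exact h2 hj
  exact ⟨j, by simpa [ji] using hj⟩

theorem sec_nt {V : Finset (Fin d → ZMod 4)} (hV : Code V) (i : Fin d) {l m : ZMod 4} (h1 : l ≠ m) :
    ∀ u ∈ sec V i l, u ∉ sec V i m := by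
  intro w hu0 hv0
  obtain ⟨u, hu, ul, rfl⟩ := mem_sec.1 hu0
  obtain ⟨v, hv, vl, he⟩ := mem_sec.1 hv0
  have hne : u ≠ v := fun h => h1 (by rw [← ul, ← vl, h])
  obtain ⟨k, hk, hk2⟩ := (hV u hu v hv hne).2 i
  exact hk2 (upd_inj he k hk).symm

theorem sec_disj {V W : Finset (Fin d → ZMod 4)} (h : ∀ v ∈ V, v ∉ W) (i : Fin d) (l : ZMod 4) :
    ∀ u ∈ sec V i l, u ∉ sec W i l := by
  intro w hu0 hv0
  obtain ⟨u, hu, ul, rfl⟩ := mem_sec.1 hu0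
  obtain ⟨v, hv, vl, he⟩ := mem_sec.1 hv0
  have := upd_inj2 he (by rw [ul, vl])
  subst this
  exact h _ hu hv

theorem sec_cov {V W : Finset (Fin d → ZMod 4)} (h : ∀ x, Cov V x ↔ Cov W x) (i : Fin d) {p q : ZMod 4}
    (hpq : ∀ l, L l q ↔ l = p ∨ l = q) (x : Fin d → ZMod 4) :
    Cov (sec V i p) x ∨ Cov (sec V i q) x ↔ Cov (sec W i p) x ∨ Cov (sec W i q) x := by
  simp only [cov_sec, ← and_or_left]
  rw [← cov_upd hpq, ← cov_upd hpq, h]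

theorem sec_cfg {V W : Finset (Fin d → ZMod 4)} (hV : Code V) (hW : Code W)
    (h : ∀ x, Cov V x ↔ Cov W x) (hd : ∀ v ∈ V, v ∉ W) (i : Fin d) :
    Cfg (sec V i 0) (sec V i 1) (sec V i 2) (sec V i 3) (sec W i 0) (sec W i 1) (sec W i 2) (sec W i 3) where
  cP := sec_code hV i _
  cR := sec_code hV i _
  cP' := sec_code hV i _
  cR' := sec_code hV i _
  cQ := sec_code hW i _
  cS := sec_code hW i _
  cQ' := sec_code hW i _
  cS' := sec_code hW i _
  PR := sec_dj hV i (by decide) (by decide)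
  RP' := sec_dj hV i (by decide) (by decide)
  PRb := sec_dj hV i (by decide) (by decide)
  R'P := sec_dj hV i (by decide) (by decide)
  QS := sec_dj hW i (by decide) (by decide)
  SQ' := sec_dj hW i (by decide) (by decide)
  QSb := sec_dj hW i (by decide) (by decide)
  S'Q := sec_dj hW i (by decide) (by decide)
  c0 := sec_cov h i (by decide)
  c1 := sec_cov h i (by decide)
  c2 := sec_cov h i (by decide)
  c3 := sec_cov h i (by decide)
  tP := sec_nt hV i (by decide)
  tR := sec_nt hV i (by decide)
  tQ := sec_nt hW i (by decide)
  tS := sec_nt hW i (by decide)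
  PQ := sec_disj hd i _
  RS := sec_disj hd i _
  PQb := sec_disj hd i _
  RSb := sec_disj hd i _

theorem sec_same {V W : Finset (Fin d → ZMod 4)} (hV : Code V) (hW : Code W)
    (h : ∀ x, Cov V x ↔ Cov W x) (hd : ∀ v ∈ V, v ∉ W) (cV : V.card ≤ 11) (cW : W.card ≤ 11)
    (i : Fin d) (l : ZMod 4) (x : Fin d → ZMod 4) : Cov (sec V i l) x ↔ Cov (sec W i l) x := by
  have C := sec_cfg hV hW h hd i
  have t1 := card_total V i
  have t2 := card_total W i
  have k1 := C.card1
  have k2 := C.card2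
  have M := C.main (by omega) x
  have := C.pt x
  have hl : ∀ l : ZMod 4, l = 0 ∨ l = 1 ∨ l = 2 ∨ l = 3 := by decide
  rcases hl l with rfl | rfl | rfl | rfl <;> grind

theorem cov_letter {V : Finset (Fin d → ZMod 4)} {i : Fin d} {l : ZMod 4} {x : Fin d → ZMod 4} :
    Cov (V.filter (fun v => v i = l)) x ↔ L l (x i) ∧ Cov (sec V i l) (Function.update x i 0) := by
  rw [cov_sec]
  constructor
  · rintro ⟨v, hv, hvx⟩
    obtain ⟨hv, hl⟩ := Finset.mem_filter.1 hv
    refine ⟨hl ▸ hvx i, by simp [L], v, hv, hl, fun t ht => by simpa [ht] using hvx t⟩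
  · rintro ⟨h1, -, v, hv, hl, h2⟩
    refine ⟨v, Finset.mem_filter.2 ⟨hv, hl⟩, fun t => ?_⟩
    by_cases ht : t = i
    · rw [ht, hl]; exact h1
    · simpa [ht] using h2 t ht

theorem codes_eq : ∀ n : ℕ, ∀ V W : Finset (Fin d → ZMod 4), V.card = n → Code V → Code W →
    (∀ x, Cov V x ↔ Cov W x) → V.card ≤ 11 → W.card ≤ 11 → V = W := by
  intro n
  induction n using Nat.strong_induction_on with
  | _ n ih =>
  intro V W hn hV hW h cV cW
  by_cases hd : ∀ v ∈ V, v ∉ W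
  · have same : ∀ i l x, Cov (V.filter (fun v => v i = l)) x ↔ Cov (W.filter (fun v => v i = l)) x := by
      intro i l x
      rw [cov_letter, cov_letter, sec_same hV hW h hd cV cW]
    rcases V.eq_empty_or_nonempty with rfl | ⟨v, hv⟩
    · symm
      rw [Finset.eq_empty_iff_forall_notMem]
      intro w hw
      obtain ⟨u, hu, -⟩ := (h w).2 ⟨w, hw, mem_self w⟩
      simp at hu
    · exfalso
      have full : ∀ i, V.filter (fun u => u i = v i) = V := by
        intro i
        by_contra hne
        have hlt : (V.filter (fun u => u i = v i)).card < n := by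
          rw [← hn]
          exact Finset.card_lt_card ((Finset.filter_subset _ _).ssubset_of_ne hne)
        have := ih _ hlt _ (W.filter (fun u => u i = v i)) rfl (hV.mono (Finset.filter_subset _ _))
          (hW.mono (Finset.filter_subset _ _)) (same i (v i)) (by omega)
          ((Finset.card_filter_le _ _).trans cW)
        have h1 : v ∈ V.filter (fun u => u i = v i) := Finset.mem_filter.2 ⟨hv, rfl⟩
        rw [this] at h1
        exact hd v hv (Finset.mem_filter.1 h1).1
      obtain ⟨w, hw, -⟩ := (h v).1 ⟨v, hv, mem_self v⟩
      have : w = v := by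
        funext i
        obtain ⟨u, hu, -⟩ := (same i (w i) w).2 ⟨w, Finset.mem_filter.2 ⟨hw, rfl⟩, mem_self w⟩
        obtain ⟨hu, hui⟩ := Finset.mem_filter.1 hu
        rw [← full i] at hu
        rw [← hui, (Finset.mem_filter.1 hu).2]
      exact hd v hv (this ▸ hw)
  · push Not at hd
    obtain ⟨v, hv, hvW⟩ := hd
    have hlt : (V \ W).card < n := by
      rw [← hn]
      refine Finset.card_lt_card ⟨Finset.sdiff_subset, fun hh => ?_⟩
      exact (Finset.mem_sdiff.1 (hh hv)).2 hvW
    have half : ∀ A B : Finset (Fin d → ZMod 4), Code A → (∀ x, Cov A x → Cov B x) → ∀ x,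
        Cov (A \ B) x → Cov (B \ A) x := by
      rintro A B hA hAB x ⟨u, hu0, hux⟩
      obtain ⟨hu, huB⟩ := Finset.mem_sdiff.1 hu0
      obtain ⟨w, hw, hwx⟩ := hAB x ⟨u, hu, hux⟩
      refine ⟨w, Finset.mem_sdiff.2 ⟨hw, fun hwA => huB ?_⟩, hwx⟩
      rw [hA.uniq hu hwA hux hwx]
      exact hw
    have e := ih _ hlt (V \ W) (W \ V) rfl (hV.mono Finset.sdiff_subset) (hW.mono Finset.sdiff_subset)
      (fun x => ⟨half V W hV (fun x => (h x).1) x, half W V hW (fun x => (h x).2) x⟩)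
      (by omega) ((Finset.card_le_card Finset.sdiff_subset).trans cW)
    ext u
    have := Finset.ext_iff.1 e u
    simp only [Finset.mem_sdiff] at this
    tauto

end KC

theorem KellerAdj.code {d : ℕ} {u v : Fin d → ZMod 4} (h : KellerAdj u v) : KC.Dj u v ∧ KC.NT u v := by
  obtain ⟨h1, j, hj⟩ := h
  constructor
  · refine ⟨j, ?_⟩
    have : ∀ a b : ZMod 4, a - b = 2 → b = a + 2 := by decide
    exact this _ _ hj
  · intro t
    obtain ⟨k, hk, hkt⟩ := Set.exists_ne_of_one_lt_ncard (show 1 < {i | u i ≠ v i}.ncard by omega) t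
    exact ⟨k, hkt, hk⟩

theorem kellerG_fac : ∀ a b : ZMod 4, (if KC.L b a then (1 : ℤ) else 0) + (if KC.L b (a + 1) then 1 else 0)
    = ((2 * (if a = b then 1 else 0) + (if b ≠ a ∧ b ≠ a + 2 then 1 else 0) : ℕ) : ℤ) := by decide

theorem keller_wt {d : ℕ} (V : Finset (Fin d → ZMod 4)) (w : Fin d → ZMod 4) :
    KC.wt (fun j p => if KC.L (w j) p then 1 else 0) V = ((∑ v ∈ V, kellerG v w : ℕ) : ℤ) := by
  unfold KC.wt kellerG
  rw [Nat.cast_sum]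
  refine Finset.sum_congr rfl fun v _ => ?_
  rw [Nat.cast_prod]
  exact Finset.prod_congr rfl fun j _ => kellerG_fac _ _

theorem kellerG_self {d : ℕ} (w : Fin d → ZMod 4) : kellerG w w = 2 ^ d := by
  simp [kellerG]

theorem keller_cov {d : ℕ} {V : Finset (Fin d → ZMod 4)} (hV : KC.Code V) {w : Fin d → ZMod 4}
    (h : ∑ v ∈ V, kellerG v w = 2 ^ d) {x : Fin d → ZMod 4} (hx : KC.Mem w x) : KC.Cov V x := by
  classical
  have hw : KC.Code {w} := by
    intro u hu v hv huv
    simp only [Finset.mem_singleton] at hu hv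
    exact absurd (hu.trans hv.symm) huv
  have e1 := KC.wt_eq hV (fun j p => if KC.L (w j) p then 1 else 0)
  have e2 := KC.wt_eq hw (fun j p => if KC.L (w j) p then 1 else 0)
  rw [keller_wt, h] at e1
  rw [keller_wt, Finset.sum_singleton, kellerG_self, ← e1] at e2
  have pr : ∀ y : Fin d → ZMod 4, (∏ j, if KC.L (w j) (y j) then (1 : ℤ) else 0) =
      if KC.Mem w y then 1 else 0 := by
    intro y
    rw [Finset.prod_ite_zero]
    by_cases hy : KC.Mem w y
    · rw [if_pos hy, if_pos (fun i _ => hy i)]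
      simp
    · rw [if_neg hy, if_neg (fun hh => hy fun i => hh i (Finset.mem_univ i))]
  simp only [pr] at e2
  have le : ∀ y ∈ Finset.univ, KC.ind V y * (if KC.Mem w y then 1 else 0) ≤
      KC.ind {w} y * (if KC.Mem w y then 1 else 0) := by
    intro y _
    by_cases hy : KC.Mem w y
    · have : KC.Cov {w} y := ⟨w, by simp, hy⟩
      unfold KC.ind
      simp only [hy, this]
      split_ifs <;> simp
    · simp [hy]
  have := (Finset.sum_eq_sum_iff_of_le le).1 e2.symm x (Finset.mem_univ x)
  have hc : KC.Cov {w} x := ⟨w, by simp, hx⟩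
  unfold KC.ind at this
  by_contra hn
  simp [hx, hc, hn] at this

theorem equivalent_cliques_eq {d : ℕ} (V W : Finset (Fin d → ZMod 4))
    (hV : ∀ u ∈ V, ∀ v ∈ V, u ≠ v → KellerAdj u v)
    (hW : ∀ u ∈ W, ∀ v ∈ W, u ≠ v → KellerAdj u v)
    (hVW : ∀ w ∈ W, ∑ v ∈ V, kellerG v w = 2 ^ d)
    (hWV : ∀ v ∈ V, ∑ w ∈ W, kellerG w v = 2 ^ d)
    (hVcard : V.card ≤ 11) (hWcard : W.card ≤ 11) :
    V = W := by
  have cV : KC.Code V := fun u hu v hv h => (hV u hu v hv h).code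
  have cW : KC.Code W := fun u hu v hv h => (hW u hu v hv h).code
  refine KC.codes_eq _ V W rfl cV cW (fun x => ⟨?_, ?_⟩) hVcard hWcard
  · rintro ⟨v, hv, hx⟩
    exact keller_cov cW (hWV v hv) hx
  · rintro ⟨w, hw, hx⟩
    exact keller_cov cV (hVW w hw) hx
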